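/- arXiv:2107.02724 — 2 statements merged into one kernel-verified Lean document; each statement's English description precedes it below -/
import Mathlib

section
/- Let n ≥ 5, let G be a subgroup of the symmetric group S_n, and let C be any subset of S_n with |C| = |G|. If |{σ ∈ C : σ has no fixed points}| / |C| = D_n / n!, then G = A_n or G = S_n. -/
open MulAction Equiv Equiv.Perm
open scoped Pointwise

theorem num_cong (q m : ℕ) (hqm : q ∣ m + 1) (j : ℕ) (D : ℕ)
    (hj : j = 0 ∧ D = 1 ∨ j = 2 ∧ D = 1 ∨ j = 3 ∧ D = 2 ∨ j = 4 ∧ D = 9)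
    (hD : ¬ (q ∣ D)) : ¬ q ∣ numDerangements (m + 1 + j) := by
  rw [← ZMod.natCast_eq_zero_iff] at *
  intro h
  apply hD
  have c : ∀ k : ℕ, (numDerangements (k + 1) : ZMod q)
      = (k + 1) * numDerangements k - (-1) ^ k := by
    intro k
    have := congrArg (Int.cast : ℤ → ZMod q) (numDerangements_succ k)
    push_cast at this
    exact this
  have e0 := c m
  have e1 := c (m + 1)
  have e2 := c (m + 1 + 1)
  have e3 := c (m + 1 + 2)
  have e4 := c (m + 1 + 3)
  have hs : ((-1 : ZMod q) ^ m) * (-1) ^ m = 1 := by rw [← mul_pow]; norm_num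
  push_cast at *
  simp only [pow_add] at *
  generalize ((-1 : ZMod q) ^ m) = s at *
  have hm : (m : ZMod q) = - 1 := by linear_combination hqm
  rw [hm] at e0 e1 e2 e3 e4
  norm_num at e0 e1 e2 e3 e4
  have f2 : (numDerangements (m + 1 + 2) : ZMod q) = -s := by
    rw [show m + 1 + 2 = m + 1 + 1 + 1 from rfl, e2, e1, e0]; ring
  have f3 : (numDerangements (m + 1 + 3) : ZMod q) = -s * 2 := by
    rw [show m + 1 + 3 = m + 1 + 2 + 1 from rfl, e3, f2]; ring
  have f4 : (numDerangements (m + 1 + 4) : ZMod q) = -s * 9 := by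
    rw [show m + 1 + 4 = m + 1 + 3 + 1 from rfl, e4, f3]; ring
  rcases hj with ⟨rfl, rfl⟩ | ⟨rfl, rfl⟩ | ⟨rfl, rfl⟩ | ⟨rfl, rfl⟩
  · rw [add_zero, e0] at h; push_cast; linear_combination (-s) * h - hs
  · rw [f2] at h; push_cast; linear_combination (-s) * h - hs
  · rw [f3] at h; push_cast; linear_combination (-s) * h - 2 * hs
  · rw [f4] at h; push_cast; linear_combination (-s) * h - 9 * hs

theorem dvd_index_mul {S X : Type*} [Group S] [Finite S] [MulAction S X] (G : Subgroup S) (x : X) :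
    (orbit S x).ncard ∣ G.index * (orbit G x).ncard := by
  rw [← index_stabilizer, ← index_stabilizer]
  have : (stabilizer G x) = (stabilizer S x).subgroupOf G := by
    ext g; simp [Subgroup.mem_subgroupOf]; rfl
  rw [this]
  change _ ∣ G.index * (stabilizer S x).relIndex G
  rw [← Subgroup.inf_relIndex_right, mul_comm, Subgroup.relIndex_mul_index inf_le_right]
  exact Subgroup.index_dvd_of_le inf_le_left

theorem cycle_mem {n : ℕ} (G : Subgroup (Perm (Fin n))) (q : ℕ) (hq : q.Prime) (hqn : q ≤ n)
    (hd : ¬ q ∣ G.index) : ∃ g ∈ G, g.IsCycle ∧ g.support.card = q := by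
  obtain ⟨g, hg⟩ := (Equiv.Perm.exists_with_cycleType_iff (α := Fin n) (m := {q})).2
    ⟨by simpa using hqn, by simpa using hq.two_le⟩
  have hc : g.IsCycle := by rw [← card_cycleType_eq_one, hg]; rfl
  have hs : g.support.card = q := by rw [← sum_cycleType, hg]; simp
  have ho : orderOf g = q := by rw [← lcm_cycleType, hg]; simp
  have : Fact q.Prime := ⟨hq⟩
  have hp : IsPGroup q (Subgroup.zpowers g) := by
    apply IsPGroup.of_card (n := 1); rw [Nat.card_zpowers, ho, pow_one]
  obtain ⟨x, hx⟩ := hp.nonempty_fixed_point_of_prime_not_dvd_card (Perm (Fin n) ⧸ G) hd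
  induction x using QuotientGroup.induction_on with | H x => 
  have h1 := hx ⟨g, Subgroup.mem_zpowers g⟩
  have h2 : ((g * x : Perm (Fin n)) : Perm (Fin n) ⧸ G) = x := h1
  have h3 := QuotientGroup.eq.1 h2.symm
  rw [← mul_assoc] at h3
  refine ⟨_, h3, ?_, ?_⟩
  · simpa using hc.conj (g := x⁻¹)
  · have := card_support_conj (σ := x⁻¹) (τ := g)
    simpa [hs] using this

theorem three_cycle {α : Type*} [Fintype α] [DecidableEq α] (g h : Perm α) (a : α)
    (ha : g a ≠ a) (ha' : h a ≠ a) (H : ∀ x, g x ≠ x → h x ≠ x → x = a) :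
    IsThreeCycle (g * h * g⁻¹ * h⁻¹) := by
  have e1 : h (g a) = g a := by
    by_contra hh
    exact ha (H (g a) (fun e => ha (g.injective e)) hh)
  have e2 : g (h a) = h a := by
    by_contra hh
    exact ha' (H (h a) hh (fun e => ha' (h.injective e)))
  have e3 : h (g⁻¹ a) = g⁻¹ a := by
    by_contra hh
    have := (H (g⁻¹ a) (fun e => ha (by simpa using congrArg g e.symm |>.symm)) hh)
    exact ha (by nth_rw 1 [← this]; simp)
  have e4 : g (h⁻¹ a) = h⁻¹ a := by
    by_contra hh
    have := (H (h⁻¹ a) hh (fun e => ha' (by simpa using congrArg h e.symm |>.symm)))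
    exact ha' (by nth_rw 1 [← this]; simp)
  have hne : g a ≠ h a := by
    intro e
    rw [← e] at e2
    exact ha (g.injective e2)
  rw [← card_support_eq_three_iff]
  have : (g * h * g⁻¹ * h⁻¹).support = {a, g a, h a} := by
    ext x
    rw [mem_support]
    simp only [Finset.mem_insert, Finset.mem_singleton]
    constructor
    · intro hx
      by_contra! hc
      obtain ⟨h1, h2, h3⟩ := hc
      apply hx
      by_cases hh : h x = x
      · have : h⁻¹ x = x := by rw [inv_eq_iff_eq]; exact hh.symm
        simp only [coe_mul, Function.comp_apply, this]
        have : h (g⁻¹ x) = g⁻¹ x := by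
          by_contra hk
          by_cases hg : g x = x
          · have e : g⁻¹ x = x := by rw [inv_eq_iff_eq]; exact hg.symm
            rw [e] at hk; exact hk hh
          · have := H (g⁻¹ x) (fun e => hg (by simpa using congrArg g e.symm |>.symm)) hk
            exact h2 (by rw [← this]; simp)
        rw [this]; simp
      · have hgx : g x = x := by
          by_contra hg; exact h1 (H x hg hh)
        have : g (h⁻¹ x) = h⁻¹ x := by
          by_contra hk
          have := H (h⁻¹ x) hk (fun e => hh (by simpa using congrArg h e.symm |>.symm))
          exact h3 (by rw [← this]; simp)
        have : g⁻¹ (h⁻¹ x) = h⁻¹ x := by rw [inv_eq_iff_eq]; exact this.symm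
        simp only [coe_mul, Function.comp_apply, this]
        simp [hgx]
    · rintro (rfl | rfl | rfl)
      · have : g⁻¹ (h⁻¹ x) = h⁻¹ x := by rw [inv_eq_iff_eq]; exact e4.symm
        simp only [coe_mul, Function.comp_apply, this]
        simpa using ha
      · have : h⁻¹ (g a) = g a := by rw [inv_eq_iff_eq]; exact e1.symm
        simp only [coe_mul, Function.comp_apply, this]
        simpa [e2] using hne.symm
      · simp only [coe_mul, Function.comp_apply]
        have e3' : h (Equiv.symm g a) = Equiv.symm g a := e3
        simpa [e3'] using ha'.symm
  rw [this]
  rw [Finset.card_eq_three]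
  exact ⟨_, _, _, ha.symm, ha'.symm, hne, rfl⟩

theorem ncard_orbit_set {n : ℕ} (B : Set (Fin n)) :
    (orbit (Perm (Fin n)) B).ncard = n.choose B.ncard := by
  classical
  have := Set.powersetCard.isPretransitive (α := Fin n) (n := B.ncard)
  have hB : (B.toFinset) ∈ Set.powersetCard (Fin n) B.ncard := by
    simp [Set.powersetCard.mem_iff, Set.ncard_eq_toFinset_card']
  have h1 := index_stabilizer_of_transitive (Perm (Fin n))
    (⟨B.toFinset, hB⟩ : Set.powersetCard (Fin n) B.ncard)
  rw [Set.powersetCard.stabilizer_coe] at h1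
  have h2 : ((⟨B.toFinset, hB⟩ : Set.powersetCard (Fin n) B.ncard) : Set (Fin n)) = B := by
    ext x; simp
  rw [h2, index_stabilizer, Set.powersetCard.card] at h1
  simpa using h1

theorem choose_dvd_index {n : ℕ} (hn : 1 ≤ n) (G : Subgroup (Perm (Fin n)))
    [IsPretransitive G (Fin n)] (B : Set (Fin n)) (hB : IsBlock G B) (hne : B.Nonempty) :
    B.ncard ∣ n ∧ (n - 1).choose (B.ncard - 1) ∣ G.index := by
  have h1 := dvd_index_mul G B
  have h2 := hB.ncard_block_mul_ncard_orbit_eq hne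
  rw [ncard_orbit_set] at h1
  have hb : 0 < B.ncard := (Set.ncard_pos).2 hne
  simp only [Nat.card_eq_fintype_card, Fintype.card_fin] at h2
  refine ⟨⟨_, h2.symm⟩, ?_⟩
  generalize B.ncard = b at *
  generalize (orbit G B).ncard = c at *
  obtain ⟨m, rfl⟩ : ∃ m, n = m + 1 := ⟨n - 1, by omega⟩
  obtain ⟨a, rfl⟩ : ∃ m, b = m + 1 := ⟨b - 1, by omega⟩
  have h3 := Nat.add_one_mul_choose_eq m a
  have h4 : (m + 1) * m.choose a ∣ (m + 1) * G.index := by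
    rw [h3]
    calc _ ∣ G.index * c * (a + 1) := Nat.mul_dvd_mul_right h1 _
      _ = (m + 1) * G.index := by linear_combination G.index * h2
  simpa using Nat.dvd_of_mul_dvd_mul_left (by omega) h4

theorem block_big {n : ℕ} (G : Subgroup (Perm (Fin n))) [IsPretransitive G (Fin n)]
    (B : Set (Fin n)) (hB : IsBlock G B) (h2 : B.ncard = 2) (q : ℕ) (hq : q.Prime) (hq2 : q ≠ 2)
    (g : Perm (Fin n)) (hg : g ∈ G) (hc : g.IsCycle) (hs : g.support.card = q) : False := by
  obtain ⟨a, ha, hga⟩ := hc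
  have ho : orderOf g = q := by rw [← hs]; exact IsCycle.orderOf ⟨a, ha, hga⟩
  obtain ⟨x, y, hxy, rfl⟩ := Set.ncard_eq_two.1 h2
  obtain ⟨t, ht⟩ := exists_smul_eq G x a
  have hB' := hB.translate t
  have ht' : t • ({x, y} : Set (Fin n)) = {a, t • y} := by
    rw [← ht]; simp [Set.smul_set_insert]
  rw [ht'] at hB'
  have hay : a ≠ t • y := by rw [← ht]; simpa using hxy
  generalize t • y = z at *
  have key : ∀ k ∈ G, (k a = a ∨ k a = z ∨ k z = a ∨ k z = z) →
      (k a = a ∧ k z = z) ∨ (k a = z ∧ k z = a) := by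
    intro k hk hh
    have h3 := hB'.smul_eq_of_nonempty (g := ⟨k, hk⟩) (by
      rcases hh with hh | hh | hh | hh
      · exact ⟨a, by rw [Set.mem_smul_set]; exact ⟨a, by simp, hh⟩, by simp⟩
      · exact ⟨z, by rw [Set.mem_smul_set]; exact ⟨a, by simp, hh⟩, by simp⟩
      · exact ⟨a, by rw [Set.mem_smul_set]; exact ⟨z, by simp, hh⟩, by simp⟩
      · exact ⟨z, by rw [Set.mem_smul_set]; exact ⟨z, by simp, hh⟩, by simp⟩)
    have h4 : k a ∈ ({a, z} : Set (Fin n)) := by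
      rw [← h3]; exact Set.smul_mem_smul_set (a := (⟨k, hk⟩ : G)) (by simp)
    have h5 : k z ∈ ({a, z} : Set (Fin n)) := by
      rw [← h3]; exact Set.smul_mem_smul_set (a := (⟨k, hk⟩ : G)) (by simp)
    have h6 : k a ≠ k z := fun e => hay (k.injective e)
    simp only [Set.mem_insert_iff, Set.mem_singleton_iff] at h4 h5
    grind
  have hz : g z ≠ z := by
    intro e
    rcases key g hg (by tauto) with h | h
    · exact ha h.1
    · exact hay (by rw [← h.2, e])
  have hcyc : g.IsCycle := ⟨a, ha, hga⟩
  obtain ⟨i, hi⟩ := hcyc.exists_pow_eq ha hz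
  rcases key (g ^ i) (G.pow_mem hg i) (by tauto) with h | h
  · exact hay (by rw [← h.1, hi])
  · have h7 : (g ^ (2 * i)) a = a := by
      rw [two_mul, pow_add, Perm.mul_apply, h.1, h.2]
    have h8 : g ^ (2 * i) = 1 := by
      rw [hcyc.pow_eq_one_iff]; exact ⟨a, ha, h7⟩
    rw [← orderOf_dvd_iff_pow_eq_one, ho] at h8
    have h9 : q ∣ i :=
      ((Nat.coprime_primes hq Nat.prime_two).2 hq2).dvd_of_dvd_mul_left h8
    rw [← ho, orderOf_dvd_iff_pow_eq_one] at h9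
    rw [h9] at hi
    exact hay hi

theorem arith1 (b c : ℕ) (hb : 3 ≤ b) (hc : 3 ≤ c) (h : c * b - 2 ∣ (b - 1) * (b - 2)) : False := by
  obtain ⟨k, hk⟩ := h
  obtain ⟨a, rfl⟩ : ∃ a, b = a + 3 := ⟨b - 3, by omega⟩
  have h9 : 9 ≤ c * (a + 3) := by nlinarith
  obtain ⟨e, he⟩ : ∃ e, c * (a + 3) = e + 2 := ⟨c * (a + 3) - 2, by omega⟩
  rw [he] at hk
  simp at hk
  have hk' : ((a : ℤ) + 2) * (a + 1) = (c * (a + 3) - 2) * k := by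
    have : (c : ℤ) * (a + 3) = e + 2 := by exact_mod_cast he
    rw [this]; simpa using (by exact_mod_cast hk : ((a : ℤ) + 2) * (a + 1) = e * k)
  have hd : ((a : ℤ) + 3) ∣ 2 * (k + 1) := ⟨c * k - a, by linear_combination hk'⟩
  obtain ⟨j, hj⟩ := hd
  have hj1 : 1 ≤ j := by
    by_contra! hh
    have : ((a : ℤ) + 3) * j ≤ 0 := by nlinarith
    omega
  have e1 : (k : ℤ) * c = a + j := by
    have : ((a : ℤ) + 3) * (k * c) = (a + 3) * (a + j) := by linear_combination -hk' + hj
    exact mul_left_cancel₀ (by positivity) this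
  have hc' : (3 : ℤ) ≤ c := by exact_mod_cast hc
  have : (k : ℤ) * 3 ≤ k * c := by nlinarith
  nlinarith

theorem coprime_aux1 (n b d : ℕ) (hb : 3 ≤ b) (hn : 5 ≤ n) (hd : (n - 1).choose (b - 1) ∣ d)
    (hc : Nat.Coprime (n - 2) d) : n - 2 ∣ (b - 1) * (b - 2) := by
  obtain ⟨m, rfl⟩ : ∃ a, n = a + 3 := ⟨n - 3, by omega⟩
  obtain ⟨a, rfl⟩ : ∃ a, b = a + 3 := ⟨b - 3, by omega⟩
  have h1 := Nat.add_one_mul_choose_eq (m + 1) (a + 1)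
  have h2 := Nat.add_one_mul_choose_eq m a
  simp at hd hc ⊢
  have h3 : m + 1 ∣ (m + 2).choose (a + 2) * ((a + 2) * (a + 1)) :=
    ⟨(m + 2) * m.choose a, by linear_combination (a+1) * h1.symm + (m + 2) * h2.symm⟩
  exact (hc.coprime_dvd_right hd).dvd_of_dvd_mul_left h3

theorem coprime_aux2 (b d : ℕ) (hb : 3 ≤ b) (hd : (2 * b - 1).choose (b - 1) ∣ d)
    (hc : Nat.Coprime (2 * b - 3) d) (h2 : ¬ 2 ∣ d) : False := by
  rcases hb.eq_or_lt with rfl | hb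
  · exact h2 ((by decide : 2 ∣ (2 * 3 - 1).choose (3 - 1)).trans hd)
  obtain ⟨a, rfl⟩ : ∃ a, b = a + 4 := ⟨b - 4, by omega⟩
  have h1 := Nat.add_one_mul_choose_eq (2 * a + 6) (a + 2)
  have h2 := Nat.add_one_mul_choose_eq (2 * a + 5) (a + 1)
  have h3 := Nat.add_one_mul_choose_eq (2 * a + 4) a
  rw [show 2 * (a + 4) - 3 = 2 * a + 5 by omega] at hc
  rw [show 2 * (a + 4) - 1 = 2 * a + 7 by omega] at hd
  simp at hd
  have h3 : 2 * a + 5 ∣ (2 * a + 7).choose (a + 3) * ((a + 3) * (a + 2) * (a + 1)) :=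
    ⟨(2 * a + 7) * (2 * a + 6) * (2 * a + 4).choose a, by
      linear_combination (a+1) * (a + 2) * h1.symm + (a + 1) * (2 * a + 7) * h2.symm
        + (2 * a + 7) * (2 * a + 6) * h3.symm⟩
  have h4 := (hc.coprime_dvd_right hd).dvd_of_dvd_mul_left h3
  have h5 : ((2 * a + 5 : ℕ) : ℤ) ∣ 3 := by
    have h6 : ((2 * a + 5 : ℕ) : ℤ) ∣ ((a + 3) * (a + 2) * (a + 1) : ℕ) := by exact_mod_cast h4
    obtain ⟨u, hu⟩ := h6
    push_cast at hu
    refine ⟨8 * u - (2 * a + 5) ^ 2 + 3 * (2 * a + 5) + 1, ?_⟩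
    push_cast
    linear_combination 8 * hu
  have h6 := Int.le_of_dvd (by norm_num) h5
  omega

theorem multi_trans {n : ℕ} (G : Subgroup (Perm (Fin n))) (hG : IsPreprimitive G (Fin n))
    (q : ℕ) (hq : q.Prime) (hqn : q < n) (g : Perm (Fin n)) (hg : g ∈ G) (hc : g.IsCycle)
    (hs : g.support.card = q) : IsMultiplyPretransitive G (Fin n) (n - q + 1) := by
  have h2 := hq.two_le
  obtain ⟨k, hk⟩ : ∃ k, n = k + 1 + q := ⟨n - q - 1, by omega⟩
  rw [show n - q + 1 = k + 2 by omega]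
  have hsup : ((g.support : Set (Fin n))ᶜ).ncard = k + 1 := by
    have := Set.ncard_add_ncard_compl (g.support : Set (Fin n))
    rw [Set.ncard_coe_finset, hs, Nat.card_eq_fintype_card, Fintype.card_fin] at this
    omega
  have := isPretransitive_of_isCycle_mem hc hg
  have h3 := hG.isMultiplyPreprimitive hsup (by simp; omega) (by
    apply IsPreprimitive.of_prime_card
    convert hq
    classical
    have : Fintype (SubMulAction.ofFixingSubgroup G ((g.support : Set (Fin n))ᶜ)) := Fintype.ofFinite _
    rw [Nat.card_eq_fintype_card, Fintype.card_subtype, ← hs]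
    apply congr_arg
    ext x
    simp [SubMulAction.mem_ofFixingSubgroup_iff])
  exact IsMultiplyPreprimitive.isMultiplyPretransitive ..

theorem jordan_small {n : ℕ} (G : Subgroup (Perm (Fin n))) (hG : IsPreprimitive G (Fin n))
    (q : ℕ) (hq : q.Prime) (hqn : 2 * q ≤ n + 1) (hn : 3 < n)
    (hd : ¬ q ∣ G.index) :
    alternatingGroup (Fin n) ≤ G := by
  obtain ⟨g, hg, hc, hs⟩ := cycle_mem G q hq (by omega) hd
  have hq2 := hq.two_le
  have hm := multi_trans G hG q hq (by omega) g hg hc hs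
  have hm' : IsMultiplyPretransitive G (Fin n) q :=
    isMultiplyPretransitive_of_le (n := n - q + 1) (by omega) (by simp; omega)
  rw [isMultiplyPretransitive_iff] at hm'
  have e : Fin q ≃ g.support := (Fintype.equivFinOfCardEq (by rw [Fintype.card_coe]; exact hs)).symm
  let x : Fin q ↪ Fin n := e.toEmbedding.trans (Function.Embedding.subtype _)
  have hx : ∀ i, x i ∈ g.support := fun i => (e i).2
  have hx' : ∀ y ∈ g.support, ∃ i, x i = y := fun y hy => ⟨e.symm ⟨y, hy⟩, by simp [x]⟩
  let z : Fin q := ⟨0, by omega⟩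
  have hcard : q ≤ (insert (x z) g.supportᶜ).card := by
    rw [Finset.card_insert_of_notMem (by simpa using hx z), Finset.card_compl, hs]
    simp; omega
  obtain ⟨T, hT1, hT2, hT3⟩ := Finset.exists_subsuperset_card_eq
    (s := {x z}) (t := insert (x z) g.supportᶜ) (n := q) (by simp) (by simp; omega) hcard
  have e' : Fin q ≃ T := (Fintype.equivFinOfCardEq (by rw [Fintype.card_coe]; exact hT3)).symm
  let y : Fin q ↪ Fin n := e'.toEmbedding.trans (Function.Embedding.subtype _)
  have hy : ∀ i, y i ∈ T := fun i => (e' i).2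
  have hy' : ∀ w ∈ T, ∃ i, y i = w := fun w hw => ⟨e'.symm ⟨w, hw⟩, by simp [y]⟩
  obtain ⟨t, ht⟩ := hm' x y
  have ht' : ∀ i, (t : Perm (Fin n)) (x i) = y i := fun i => by rw [← ht]; rfl
  refine alternatingGroup_le_of_isPreprimitive_of_isThreeCycle_mem hG
    (three_cycle g (t * g * (t : Perm (Fin n))⁻¹) (x z) ?_ ?_ ?_) ?_
  · simpa using hx z
  · obtain ⟨i, hi⟩ := hy' (x z) (hT1 (by simp))
    have : (t : Perm (Fin n))⁻¹ (x z) = x i := by rw [inv_eq_iff_eq, ht', hi]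
    simp only [coe_mul, Function.comp_apply, this]
    rw [← hi, ← ht']
    have := hx i
    rw [mem_support] at this
    simpa using this
  · intro w h1 h2
    have h3 : (t : Perm (Fin n))⁻¹ w ∈ g.support := by
      rw [mem_support]
      intro h
      apply h2
      simp only [coe_mul, Function.comp_apply, h]
      simp
    obtain ⟨i, hi⟩ := hx' _ h3
    have h4 : w = y i := by rw [← ht', hi]; simp
    have h5 := hT2 (hy i)
    rw [← h4] at h5
    simp at h5
    tauto
  · have h1 := G.mul_mem (G.mul_mem t.2 hg) (G.inv_mem t.2)
    exact G.mul_mem (G.mul_mem (G.mul_mem hg h1) (G.inv_mem hg)) (G.inv_mem h1)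

theorem case_seven (G : Subgroup (Perm (Fin 7))) (hG : IsPreprimitive G (Fin 7))
    (hd : G.index ∣ numDerangements 7) : alternatingGroup (Fin 7) ≤ G := by
  have hD : numDerangements 7 = 1854 := by decide
  rw [hD] at hd
  obtain ⟨g, hg, hc, hs⟩ := cycle_mem G 5 (by norm_num) (by norm_num) (by
    intro h; have := h.trans hd; norm_num at this)
  have hm := multi_trans G hG 5 (by norm_num) (by norm_num) g hg hc hs
  have h1 := hm.index_of_fixingSubgroup_mul (s := ({0, 1, 2} : Set (Fin 7))) (by
    rw [Set.ncard_eq_toFinset_card']; rfl)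
  have h2 : 210 ∣ Nat.card G := by
    have := (fixingSubgroup G ({0, 1, 2} : Set (Fin 7))).index_dvd_card
    simp [Nat.factorial] at h1
    have h3 : (fixingSubgroup G ({0, 1, 2} : Set (Fin 7))).index = 210 := by omega
    rwa [h3] at this
  have h3 := G.card_mul_index
  rw [Nat.card_perm] at h3
  simp only [Nat.card_eq_fintype_card (α := Fin 7), Fintype.card_fin] at h3
  rw [show Nat.factorial 7 = 5040 from rfl] at h3
  have h4 : G.index ∣ 24 := by
    obtain ⟨k, hk⟩ := h2
    exact ⟨k, by rw [hk] at h3; nlinarith⟩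
  have h5 : G.index ∣ 6 := by
    have := Nat.dvd_gcd hd h4
    norm_num at this
    exact this
  have h6 : G.index ≤ 6 := Nat.le_of_dvd (by norm_num) h5
  have h7 : G.normalCore.index ≤ 720 := by
    rw [Subgroup.normalCore_eq_ker, Subgroup.index_ker]
    calc _ ≤ Nat.card (Perm (Perm (Fin 7) ⧸ G)) := Nat.card_le_card_of_injective _ Subtype.val_injective
      _ = G.index.factorial := by rw [Nat.card_perm]; rfl
      _ ≤ Nat.factorial 6 := Nat.factorial_le h6
      _ = 720 := rfl
  refine (alternatingGroup_le_of_normal (by simp) (N := G.normalCore) ?_).trans G.normalCore_le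
  rw [Subgroup.nontrivial_iff_ne_bot]
  intro h8
  rw [h8, Subgroup.index_bot, Nat.card_perm] at h7
  simp [Nat.factorial] at h7

theorem prim {n : ℕ} (hn : 5 ≤ n) (G : Subgroup (Perm (Fin n)))
    (h0 : ∀ q, q.Prime → q ∣ n → ¬ q ∣ G.index)
    (h2 : ∀ q, q.Prime → q ∣ n - 2 → ¬ q ∣ G.index)
    (h3 : ∀ q, q.Prime → q ≠ 2 → q ∣ n - 3 → ¬ q ∣ G.index) :
    IsPreprimitive G (Fin n) := by
  have c0 : Nat.Coprime n G.index := Nat.coprime_of_dvd h0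
  have c2 : Nat.Coprime (n - 2) G.index := Nat.coprime_of_dvd h2
  have htr : IsPretransitive G (Fin n) := by
    let x : Fin n := ⟨0, by omega⟩
    rw [isPretransitive_iff_orbit_eq_univ x, Set.eq_univ_iff_ncard]
    have h := dvd_index_mul G x
    rw [orbit_eq_univ, Set.ncard_univ] at h
    simp only [Nat.card_eq_fintype_card, Fintype.card_fin] at h ⊢
    have h5 := c0.dvd_of_dvd_mul_left h
    refine le_antisymm ?_ (Nat.le_of_dvd ?_ h5)
    · simpa using Set.ncard_le_card (orbit G x)
    · exact (Set.ncard_pos).2 ⟨x, mem_orbit_self x⟩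
  refine ⟨fun {B} hB => ?_⟩
  by_contra hcon
  unfold IsTrivialBlock at hcon
  push Not at hcon
  obtain ⟨hB1, hB2⟩ := hcon
  have hne := hB1.nonempty
  obtain ⟨⟨c, hbc⟩, hch⟩ := choose_dvd_index (by omega) G B hB hne
  have hb2 : 2 ≤ B.ncard := (Set.one_lt_ncard).2 hB1
  have hc1 : c ≠ 1 := by
    rintro rfl
    apply hB2
    rw [Set.eq_univ_iff_ncard]
    simp; omega
  have hc0 : c ≠ 0 := by rintro rfl; omega
  have hb3 : 3 ≤ B.ncard := by
    by_contra! hlt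
    have hb : B.ncard = 2 := by omega
    obtain ⟨q, hq, hqd⟩ := Nat.exists_prime_and_dvd (n := n - 3) (by omega)
    have hq2 : q ≠ 2 := by
      rintro rfl
      rw [hb] at hbc
      omega
    obtain ⟨g, hg, hgc, hgs⟩ := cycle_mem G q hq
      ((Nat.le_of_dvd (by omega) hqd).trans (by omega)) (h3 q hq hq2 hqd)
    exact block_big G B hB hb q hq hq2 g hg hgc hgs
  rcases (show 3 ≤ c ∨ c = 2 by omega) with hc | rfl
  · apply arith1 _ _ hb3 hc
    have := coprime_aux1 n B.ncard G.index hb3 hn hch c2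
    rw [show c * B.ncard = n from (mul_comm _ _).trans hbc.symm]
    exact this
  · have hn' : n = 2 * B.ncard := hbc.trans (mul_comm _ _)
    have c3 : Nat.Coprime (n - 3) G.index := by
      apply Nat.coprime_of_dvd
      intro q hq hqd
      refine h3 q hq ?_ hqd
      rintro rfl
      omega
    have hodd := h0 2 Nat.prime_two ⟨_, hn'⟩
    refine coprime_aux2 B.ncard G.index hb3 ?_ ?_ hodd
    · rwa [← hn']
    · rwa [← hn']

theorem main_alt {n : ℕ} (hn : 5 ≤ n) (G : Subgroup (Perm (Fin n)))
    (hd : G.index ∣ numDerangements n) : alternatingGroup (Fin n) ≤ G := by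
  have h0 : ∀ q, q.Prime → q ∣ n → ¬ q ∣ G.index := by
    intro q hq hqn hqd
    refine num_cong q (n - 1) (by rwa [show n - 1 + 1 = n by omega]) 0 1 (by simp)
      (by simpa using hq.ne_one) ?_
    rw [show n - 1 + 1 + 0 = n by omega]; exact hqd.trans hd
  have h2 : ∀ q, q.Prime → q ∣ n - 2 → ¬ q ∣ G.index := by
    intro q hq hqn hqd
    refine num_cong q (n - 3) (by rwa [show n - 3 + 1 = n - 2 by omega]) 2 1 (by simp)
      (by simpa using hq.ne_one) ?_
    rw [show n - 3 + 1 + 2 = n by omega]; exact hqd.trans hd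
  have h3 : ∀ q, q.Prime → q ≠ 2 → q ∣ n - 3 → ¬ q ∣ G.index := by
    intro q hq hq2 hqn hqd
    refine num_cong q (n - 4) (by rwa [show n - 4 + 1 = n - 3 by omega]) 3 2 (by simp)
      (by rwa [Nat.prime_dvd_prime_iff_eq hq Nat.prime_two]) ?_
    rw [show n - 4 + 1 + 3 = n by omega]; exact hqd.trans hd
  have h4 : ∀ q, q.Prime → q ≠ 3 → q ∣ n - 4 → ¬ q ∣ G.index := by
    intro q hq hq2 hqn hqd
    refine num_cong q (n - 5) (by rwa [show n - 5 + 1 = n - 4 by omega]) 4 9 (by simp)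
      (fun h => hq2 ((Nat.prime_dvd_prime_iff_eq hq Nat.prime_three).1
        (hq.dvd_of_dvd_pow (show q ∣ 3 ^ 2 from h)))) ?_
    rw [show n - 5 + 1 + 4 = n by omega]; exact hqd.trans hd
  have hG := prim hn G h0 h2 h3
  by_contra hcon
  have J : ∀ q, q.Prime → 2 * q ≤ n + 1 → q ∣ G.index := by
    intro q hq hqn
    by_contra h
    exact hcon (jordan_small G hG q hq hqn (by omega) h)
  have big : ∀ m q : ℕ, q ∣ m → 0 < m → m ≠ q → 2 * q ≤ m := by
    rintro _ q ⟨k, rfl⟩ hm hne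
    have : k ≠ 1 := by rintro rfl; simp at hne
    have : k ≠ 0 := by rintro rfl; simp at hm
    have : 2 ≤ k := by omega
    nlinarith
  have p0 : n.Prime := by
    obtain ⟨q, hq, hqd⟩ := Nat.exists_prime_and_dvd (n := n) (by omega)
    by_contra hnp
    have := big n q hqd (by omega) (by rintro rfl; exact hnp hq)
    exact h0 q hq hqd (J q hq (by omega))
  have p2 : (n - 2).Prime := by
    obtain ⟨q, hq, hqd⟩ := Nat.exists_prime_and_dvd (n := n - 2) (by omega)
    by_contra hnp
    have := big _ q hqd (by omega) (by rintro h; rw [← h] at hq; exact hnp hq)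
    exact h2 q hq hqd (J q hq (by omega))
  have hodd : n % 2 = 1 := by
    rcases p0.eq_two_or_odd with h | h <;> omega
  have p3 : ∀ q, q.Prime → q ∣ n - 3 → q = 2 := by
    intro q hq hqd
    by_contra hq2
    have := big _ q hqd (by omega) (by
      intro h
      rcases hq.eq_two_or_odd with h | h <;> omega)
    exact h3 q hq hq2 hqd (J q hq (by omega))
  by_cases hn5 : n = 5
  · subst hn5
    exact h2 3 (by norm_num) (by norm_num) (J 3 (by norm_num) (by norm_num))
  have m1 : n % 3 ≠ 0 := by
    intro h
    have := (Nat.prime_dvd_prime_iff_eq Nat.prime_three p0).1 (Nat.dvd_of_mod_eq_zero h)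
    omega
  have m2 : (n - 2) % 3 ≠ 0 := by
    intro h
    have := (Nat.prime_dvd_prime_iff_eq Nat.prime_three p2).1 (Nat.dvd_of_mod_eq_zero h)
    omega
  have p4 : ∀ q, q.Prime → q ∣ n - 4 → q = 3 := by
    intro q hq hqd
    by_contra hq2
    have := big _ q hqd (by omega) (by
      intro h
      have h31 : n % 3 = 1 := by
        have : n % 3 ≠ 2 := fun h => m2 (by omega)
        omega
      have : q % 3 = 0 := by omega
      have := (Nat.prime_dvd_prime_iff_eq Nat.prime_three hq).1 (Nat.dvd_of_mod_eq_zero this)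
      omega)
    exact h4 q hq hq2 hqd (J q hq (by omega))
  have e3 := Nat.eq_prime_pow_of_unique_prime_dvd (n := n - 3) (p := 2) (by omega)
    (fun {d} h1 h2 => p3 d h1 h2)
  have e4 := Nat.eq_prime_pow_of_unique_prime_dvd (n := n - 4) (p := 3) (by omega)
    (fun {d} h1 h2 => p4 d h1 h2)
  generalize (n - 3).primeFactorsList.length = k at e3
  generalize (n - 4).primeFactorsList.length = j at e4
  have hj : 3 ^ j % 8 = 1 ∨ 3 ^ j % 8 = 3 := by
    clear e4
    induction j with
    | zero => simp
    | succ j ih => rw [pow_succ]; omega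
  have hk : k < 3 := by
    by_contra! hk
    obtain ⟨l, rfl⟩ := Nat.exists_eq_add_of_le hk
    rw [pow_add] at e3
    omega
  have hn7 : n = 7 := by interval_cases k <;> omega
  subst hn7
  exact hcon (case_seven G hG hd)

theorem derangement_proportion_subset_implies_alternating_or_symmetric
    (n : ℕ) (hn : 5 ≤ n) (G : Subgroup (Equiv.Perm (Fin n)))
    (C : Set (Equiv.Perm (Fin n))) (hcard : C.ncard = Nat.card G)
    (h : ({σ ∈ C | ∀ x, σ x ≠ x}.ncard : ℚ) / (C.ncard : ℚ)
        = (numDerangements n : ℚ) / (Nat.factorial n : ℚ)) :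
    G = alternatingGroup (Fin n) ∨ G = ⊤ := by
  have hd : G.index ∣ numDerangements n := by
    have h3 := G.card_mul_index
    rw [Nat.card_perm, Nat.card_eq_fintype_card (α := Fin n), Fintype.card_fin] at h3
    have hpos : 0 < Nat.card G := Nat.card_pos
    have hf := Nat.factorial_pos n
    rw [hcard, div_eq_div_iff (by positivity) (by positivity)] at h
    refine ⟨{σ ∈ C | ∀ x, σ x ≠ x}.ncard, ?_⟩
    have h' : {σ ∈ C | ∀ x, σ x ≠ x}.ncard * n.factorial = numDerangements n * Nat.card G := by
      exact_mod_cast h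
    rw [← h3] at h'
    apply Nat.eq_of_mul_eq_mul_right hpos
    rw [← h']; ring
  have hA := main_alt hn G hd
  have : Nontrivial (Fin n) := Fin.nontrivial_iff_two_le.2 (by omega)
  have h2 := Subgroup.index_dvd_of_le hA
  rw [alternatingGroup.index_eq_two, Nat.dvd_prime Nat.prime_two] at h2
  rcases h2 with h2 | h2
  · right; exact Subgroup.index_eq_one.1 h2
  · left; exact eq_alternatingGroup_of_index_eq_two h2
end

section
/- Let n ≥ 7, let G be a subgroup of the symmetric group S_n, and let C be a left coset of G in S_n. If the proportion of derangements in C equals the proportion of derangements in the alternating group A_n, i.e., |{σ ∈ C : σ has no fixed points}| / |C| = |{σ ∈ A_n : σ has no fixed points}| / |A_n|, then G = A_n. -/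
/-- Twice the number of even derangements of `n` letters. -/
def evenD (n : ℕ) : ℤ := (numDerangements n : ℤ) + (-1) ^ (n + 1) * ((n : ℤ) - 1)

lemma det_J (n : ℕ) : (Matrix.of (fun i j : Fin n => if i = j then (0 : ℤ) else 1)).det
    = (-1) ^ (n + 1) * ((n : ℤ) - 1) := by
  have h1 : (Matrix.of (fun i j : Fin n => if i = j then (0 : ℤ) else 1))
      = -(1 - (Matrix.replicateCol Unit (fun _ : Fin n => (1 : ℤ)))
          * (Matrix.replicateRow Unit (fun _ : Fin n => (1 : ℤ)))) := by
    ext i j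
    simp only [Matrix.of_apply, Matrix.neg_apply, Matrix.sub_apply, Matrix.mul_apply, Matrix.one_apply]
    split_ifs <;> simp
  rw [h1, Matrix.det_neg, Matrix.det_one_sub_mul_comm]
  simp [Matrix.mul_apply, pow_succ]
  ring

lemma sum_sign_derangements (n : ℕ) :
    ∑ σ : Equiv.Perm (Fin n), (if ∀ x, σ x ≠ x then (Equiv.Perm.sign σ : ℤ) else 0)
      = (-1) ^ (n + 1) * ((n : ℤ) - 1) := by
  rw [← det_J, Matrix.det_apply']
  refine Finset.sum_congr rfl fun σ _ => ?_
  simp only [Matrix.of_apply]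
  split_ifs with h
  · rw [Finset.prod_eq_one]; · simp
    intro i _; simp [h i]
  · push Not at h
    obtain ⟨x, hx⟩ := h
    rw [Finset.prod_eq_zero (Finset.mem_univ x)] <;> simp [hx]

lemma sum_one_derangements (n : ℕ) :
    ∑ σ : Equiv.Perm (Fin n), (if ∀ x, σ x ≠ x then (1 : ℤ) else 0) = numDerangements n := by
  rw [← card_derangements_fin_eq_numDerangements, Finset.sum_boole]
  congr 1
  rw [Fintype.card_subtype]
  congr 1
  ext x
  simp only [Finset.mem_filter, Finset.mem_univ, true_and]
  rw [derangements, Set.mem_ofPred_eq]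

lemma alt_count (n : ℕ) :
    2 * ({σ : Equiv.Perm (Fin n) | σ ∈ alternatingGroup (Fin n) ∧ ∀ x, σ x ≠ x}.ncard : ℤ)
      = evenD n := by
  classical
  rw [evenD, ← sum_sign_derangements, ← sum_one_derangements, ← Finset.sum_add_distrib,
    Set.ncard_eq_toFinset_card', Finset.card_eq_sum_ones]
  push_cast
  rw [Finset.mul_sum, ← Finset.sum_subset (Finset.subset_univ _)]
  · refine Finset.sum_congr rfl fun σ hσ => ?_
    simp only [Set.mem_toFinset, Set.mem_ofPred_eq, Equiv.Perm.mem_alternatingGroup] at hσ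
    simp [hσ.1]
    simp [hσ.2]
  · intro σ _ hσ
    simp only [Set.mem_toFinset, Set.mem_ofPred_eq, Equiv.Perm.mem_alternatingGroup] at hσ
    split_ifs with h
    · rcases Int.units_eq_one_or (Equiv.Perm.sign σ) with h1 | h1
      · exact absurd ⟨h1, h⟩ hσ
      · simp [h1]
    · simp

lemma deriv_dvd {n : ℕ} (hn : 2 ≤ n) (G : Subgroup (Equiv.Perm (Fin n)))
    (σ : Equiv.Perm (Fin n)) (C : Set (Equiv.Perm (Fin n)))
    (hC : C = {τ : Equiv.Perm (Fin n) | ∃ g ∈ G, τ = σ * g})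
    (h : ({σ ∈ C | ∀ x, σ x ≠ x}.ncard : ℚ) / (C.ncard : ℚ)
        = ({σ : Equiv.Perm (Fin n) | σ ∈ alternatingGroup (Fin n) ∧ ∀ x, σ x ≠ x}.ncard : ℚ)
          / (Nat.card (alternatingGroup (Fin n)) : ℚ)) :
    ({τ ∈ C | ∀ x, τ x ≠ x}.ncard : ℤ) * G.index = evenD n := by
  have hCc : C.ncard = Nat.card G := by
    have : C = (fun g => σ * g) '' (G : Set (Equiv.Perm (Fin n))) := by
      rw [hC]; ext τ; simp only [Set.mem_ofPred_eq, Set.mem_image, SetLike.mem_coe, eq_comm]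
    rw [this, Set.ncard_image_of_injective _ (mul_right_injective σ)]
    rfl
  have hA : 2 * Nat.card (alternatingGroup (Fin n)) = n.factorial := by
    have : Nontrivial (Fin n) := Fin.nontrivial_iff_two_le.mpr hn
    rw [two_mul_nat_card_alternatingGroup, Nat.card_perm, Nat.card_fin]
  have hG : Nat.card G * G.index = n.factorial := by
    rw [G.card_mul_index, Nat.card_perm, Nat.card_fin]
  have hAp : (Nat.card (alternatingGroup (Fin n)) : ℚ) ≠ 0 := by
    exact_mod_cast Nat.card_pos.ne'
  have hGp : (Nat.card G : ℚ) ≠ 0 := by exact_mod_cast Nat.card_pos.ne'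
  rw [hCc, div_eq_div_iff hGp hAp] at h
  have h3 := alt_count n
  rw [← h3]
  set a := {τ ∈ C | ∀ x, τ x ≠ x}.ncard
  set b := {σ : Equiv.Perm (Fin n) | σ ∈ alternatingGroup (Fin n) ∧ ∀ x, σ x ≠ x}.ncard
  have h4 : a * Nat.card (alternatingGroup (Fin n)) = b * Nat.card G := by exact_mod_cast h
  have : Nat.card G * (a * G.index) = Nat.card G * (2 * b) := by
    calc _ = a * (Nat.card G * G.index) := by ring
      _ = 2 * (a * Nat.card (alternatingGroup (Fin n))) := by rw [hG, ← hA]; ring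
      _ = _ := by rw [h4]; ring
  exact_mod_cast Nat.eq_of_mul_eq_mul_left Nat.card_pos this

lemma evenD_mod (n j : ℕ) (e : ℕ) (hj : (j, e) ∈ [(0, 2), (3, 4), (4, 6), (5, 48)])
    (hn : 6 ≤ n) (p : ℕ) (hp : p ∣ n - j) (hE : (p : ℤ) ∣ evenD n) : p ∣ e := by
  obtain ⟨m, rfl⟩ : ∃ m, n = m + 6 := ⟨n - 6, by omega⟩
  have h1 := numDerangements_succ m
  have h2 := numDerangements_succ (m + 1)
  have h3 := numDerangements_succ (m + 2)
  have h4 := numDerangements_succ (m + 3)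
  have h5 := numDerangements_succ (m + 4)
  have h6 := numDerangements_succ (m + 5)
  rw [show m + 5 + 1 = m + 6 from rfl] at h6
  rw [show m + 4 + 1 = m + 5 from rfl] at h5
  rw [show m + 3 + 1 = m + 4 from rfl] at h4
  rw [show m + 2 + 1 = m + 3 from rfl] at h3
  rw [show m + 1 + 1 = m + 2 from rfl] at h2
  unfold evenD at hE
  rw [h6, h5, h4, h3, h2, h1, ← ZMod.intCast_zmod_eq_zero_iff_dvd] at hE
  rw [← ZMod.natCast_eq_zero_iff] at hp ⊢
  have hs : ((-1 : ZMod p) ^ m) * (-1) ^ m = 1 := by rw [← mul_pow]; simp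
  push_cast at hE
  simp only [pow_succ] at hE
  generalize (-1 : ZMod p) ^ m = s at hE hs
  generalize (numDerangements m : ZMod p) = D at hE
  suffices (e : ZMod p) * s = 0 by
    calc (e : ZMod p) = (e * s) * s := by rw [mul_assoc, hs, mul_one]
      _ = 0 := by rw [this, zero_mul]
  have hj5 : j ≤ m + 6 := by
    simp at hj; omega
  rw [Nat.cast_sub hj5] at hp
  push_cast at hp
  have hx : (m : ZMod p) = j - 6 := by linear_combination hp
  rw [hx] at hE
  simp only [List.mem_cons, Prod.mk.injEq, List.not_mem_nil, or_false] at hj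
  rcases hj with ⟨rfl, rfl⟩ | ⟨rfl, rfl⟩ | ⟨rfl, rfl⟩ | ⟨rfl, rfl⟩ <;> push_cast at hE ⊢
  · linear_combination hE
  · linear_combination (-1) * hE
  · linear_combination hE
  · linear_combination (-1) * hE

open Nat in
lemma bell_step (p d r : ℕ) (hp : p.Prime) (hd : 2 ≤ d) (hr : 1 ≤ r) (hpn : p ≤ r * d)
    (h : ¬ p ∣ Nat.uniformBell r d) :
    p ≤ d ∧ r * (d % p) < p ∧ ¬ p ∣ Nat.uniformBell r (d / p) := by
  have : Fact p.Prime := ⟨hp⟩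
  have hB := Nat.uniformBell_mul_eq r (n := d) (by omega)
  have hB0 : Nat.uniformBell r d ≠ 0 := by
    intro h0; rw [h0] at h; simp at h
  have hv := congrArg (padicValNat p) hB
  rw [padicValNat.mul (by positivity) (by positivity), padicValNat.mul hB0 (by positivity),
    padicValNat.pow, padicValNat.eq_zero_of_not_dvd h, zero_add] at hv
  have key : ∀ m : ℕ, padicValNat p (m !) = padicValNat p ((m / p)!) + m / p := by
    intro m
    rw [← padicValNat_mul_div_factorial, padicValNat_factorial_mul]
  have mono : ∀ a b : ℕ, padicValNat p (a !) ≤ padicValNat p ((a + b)!) := by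
    intro a b
    exact (padicValNat_dvd_iff_le (by positivity)).mp
      (pow_padicValNat_dvd.trans (Nat.factorial_dvd_factorial (by omega)))
  have hp0 := hp.pos
  have hdiv : r * d / p = r * (d / p) + r * (d % p) / p := by
    conv_lhs => rw [← Nat.div_add_mod d p]
    rw [mul_add, show r * (p * (d / p)) = p * (r * (d / p)) by ring, Nat.mul_add_div hp0]
  rcases Nat.lt_or_ge d p with hdp | hdp
  · exfalso
    have h1 : padicValNat p (d !) = 0 := by
      rw [key, Nat.div_eq_of_lt hdp]; simp
    rw [h1, mul_zero, zero_add, key, key (r * d)] at hv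
    have h2 : r / p < r * d / p := by
      rcases Nat.lt_or_ge r p with h | h
      · rw [Nat.div_eq_of_lt h]; exact Nat.div_pos hpn hp0
      · have : (r + p) / p ≤ r * d / p := Nat.div_le_div_right (by nlinarith)
        rw [Nat.add_div_right _ hp0] at this
        omega
    have h3 := mono (r / p) (r * d / p - r / p)
    rw [show r / p + (r * d / p - r / p) = r * d / p by omega] at h3
    omega
  · have ha : 1 ≤ d / p := Nat.div_pos hdp hp0
    have hB' := Nat.uniformBell_mul_eq r (n := d / p) (by omega)
    have hB0' : Nat.uniformBell r (d / p) ≠ 0 := by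
      intro h0; rw [h0] at hB'; simp at hB'
      exact absurd hB'.symm (by positivity)
    have hv' := congrArg (padicValNat p) hB'
    rw [padicValNat.mul (by positivity) (by positivity), padicValNat.mul hB0' (by positivity),
      padicValNat.pow] at hv'
    rw [key d, key (r * d), hdiv] at hv
    have h3 := mono (r * (d / p)) (r * (d % p) / p)
    rw [mul_add] at hv
    refine ⟨hdp, ?_, ?_⟩
    · by_contra hc
      have : 1 ≤ r * (d % p) / p := Nat.div_pos (by omega) hp0
      omega
    · intro hdvd
      have := one_le_padicValNat_of_dvd hB0' hdvd
      generalize r * (d % p) / p = t at hv h3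
      omega

lemma prime_or_pow (x : ℕ) (hx : x % 2 = 1) :
    (∃ p, p.Prime ∧ 5 ≤ p ∧ p ∣ x) ∨ ∃ a, x = 3 ^ a := by
  by_cases h : ∃ p, p.Prime ∧ 5 ≤ p ∧ p ∣ x
  · exact Or.inl h
  · right
    refine ⟨_, Nat.eq_prime_pow_of_unique_prime_dvd (by omega) (p := 3) ?_⟩
    intro q hq hqx
    by_contra h3
    apply h
    refine ⟨q, hq, ?_, hqx⟩
    have h2 := hq.two_le
    have : q ≠ 2 := by rintro rfl; omega
    have : q ≠ 4 := by rintro rfl; revert hq; decide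
    omega

lemma le_small {p e : ℕ} (hp : p.Prime) (h5 : 5 ≤ p) (he : e ∈ [2, 4, 6, 48]) : ¬ p ∣ e := by
  intro h
  have h3 : p ∣ 48 := h.trans (by simp at he; rcases he with rfl | rfl | rfl | rfl <;> decide)
  rw [show 48 = 2 ^ 4 * 3 by norm_num, hp.dvd_mul] at h3
  rcases h3 with h3 | h3
  · have := Nat.le_of_dvd (by norm_num) (hp.dvd_of_dvd_pow h3); omega
  · have := Nat.le_of_dvd (by norm_num) h3; omega

lemma not_dvd5 {n j p : ℕ} (hn : 6 ≤ n) (hj : j = 0 ∨ j = 3 ∨ j = 4 ∨ j = 5) (hp : p.Prime)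
    (h5 : 5 ≤ p) (hd : p ∣ n - j) : ¬ (p : ℤ) ∣ evenD n := by
  intro h
  rcases hj with rfl | rfl | rfl | rfl
  · exact le_small hp h5 (e := 2) (by simp) (evenD_mod n 0 2 (by simp) hn p hd h)
  · exact le_small hp h5 (e := 4) (by simp) (evenD_mod n 3 4 (by simp) hn p hd h)
  · exact le_small hp h5 (e := 6) (by simp) (evenD_mod n 4 6 (by simp) hn p hd h)
  · exact le_small hp h5 (e := 48) (by simp) (evenD_mod n 5 48 (by simp) hn p hd h)

/-- for odd `n > 7`. -/
lemma odd_case {n : ℕ} (hn : 8 ≤ n) (h2 : n % 2 = 1) :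
    (∃ p, p.Prime ∧ 5 ≤ p ∧ p ∣ n - 4) ∨
      (n % 3 = 1 ∧ ∃ p, p.Prime ∧ 5 ≤ p ∧ p ∣ n - 3) := by
  rcases prime_or_pow (n - 4) (by omega) with h | ⟨a, ha⟩
  · exact Or.inl h
  right
  have ha1 : a ≠ 0 := by rintro rfl; simp at ha; omega
  obtain ⟨b, rfl⟩ := Nat.exists_eq_succ_of_ne_zero ha1
  have h3 : n % 3 = 1 := by rw [pow_succ] at ha; omega
  refine ⟨h3, ?_⟩
  by_contra hcon
  have : n - 3 = 2 ^ (n - 3).primeFactorsList.length := by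
    apply Nat.eq_prime_pow_of_unique_prime_dvd (by omega)
    intro q hq hqx
    by_contra hq2
    apply hcon
    refine ⟨q, hq, ?_, hqx⟩
    have h2 := hq.two_le
    have : q ≠ 3 := by rintro rfl; omega
    have : q ≠ 4 := by rintro rfl; revert hq; decide
    omega
  generalize (n - 3).primeFactorsList.length = l at this
  have hl : 3 ≤ l := by
    by_contra hl
    have : 2 ^ l ≤ 2 ^ 2 := Nat.pow_le_pow_right (by norm_num) (by omega)
    omega
  have h8 : 8 ∣ 2 ^ l := by
    exact (show 8 = 2 ^ 3 by norm_num) ▸ pow_dvd_pow 2 hl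
  have h38 : ∀ c : ℕ, 3 ^ c % 8 = 1 ∨ 3 ^ c % 8 = 3 := by
    intro c
    induction c with
    | zero => simp
    | succ c ih => rw [pow_succ]; omega
  have := h38 (b + 1)
  simp only [Nat.succ_eq_add_one] at ha
  omega

lemma exists_prime_jordan {n : ℕ} (hn : 8 ≤ n) :
    ∃ p, p.Prime ∧ 3 ≤ p ∧ p + 3 ≤ n ∧ ¬ (p : ℤ) ∣ evenD n := by
  rcases Nat.mod_two_eq_zero_or_one n with h2 | h2
  · obtain ⟨p, hp, hpd⟩ := Nat.exists_prime_and_dvd (n := n - 3) (by omega)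
    have h1 := Nat.le_of_dvd (by omega) hpd
    have := hp.two_le
    have h3 : p ≠ 2 := by rintro rfl; omega
    refine ⟨p, hp, by omega, by omega, fun h => ?_⟩
    have h4 := evenD_mod n 3 4 (by simp) (by omega) p hpd h
    rw [show 4 = 2 ^ 2 by norm_num] at h4
    have := Nat.le_of_dvd (by norm_num) (hp.dvd_of_dvd_pow h4)
    omega
  · rcases odd_case hn h2 with ⟨p, hp, h5, hd⟩ | ⟨-, p, hp, h5, hd⟩
    · have h1 := Nat.le_of_dvd (by omega) hd
      exact ⟨p, hp, by omega, by omega, not_dvd5 (by omega) (by simp) hp h5 hd⟩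
    · have h1 := Nat.le_of_dvd (by omega) hd
      exact ⟨p, hp, by omega, by omega, not_dvd5 (by omega) (by simp) hp h5 hd⟩

lemma mod_of_dvd_sub {n j p : ℕ} (hj : j < p) (hjn : j ≤ n) (h : p ∣ n - j) : n % p = j := by
  obtain ⟨k, hk⟩ := h
  rw [show n = j + p * k by omega, Nat.add_mul_mod_self_left, Nat.mod_eq_of_lt hj]

lemma mul_mod_lt {r d p : ℕ} (h : r * (d % p) < p) : (r * d) % p = r * (d % p) := by
  conv_lhs => rw [← Nat.div_add_mod d p]
  rw [mul_add, show r * (p * (d / p)) = p * (r * (d / p)) by ring, Nat.mul_add_mod,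
    Nat.mod_eq_of_lt h]

lemma bell_mod {n r d p j : ℕ} (hp : p.Prime) (hn : n = r * d) (hd : 2 ≤ d) (hr : 1 ≤ r)
    (hpn : p ≤ n) (hj : j < p) (hjn : j ≤ n) (hdv : p ∣ n - j)
    (h : ¬ p ∣ Nat.uniformBell r d) : r * (d % p) = j := by
  obtain ⟨-, h1, -⟩ := bell_step p d r hp hd hr (hn ▸ hpn) h
  rw [← mul_mod_lt h1, ← hn, mod_of_dvd_sub hj hjn hdv]

lemma imprimitive_arith {n r d : ℕ} (hn7 : 7 ≤ n) (hn : n = r * d) (hd : 2 ≤ d) (hr : 2 ≤ r)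
    (h : (Nat.uniformBell r d : ℤ) ∣ evenD n) : False := by
  have hE : ∀ p : ℕ, ¬ (p : ℤ) ∣ evenD n → ¬ p ∣ Nat.uniformBell r d := fun p hp hc =>
    hp ((Int.natCast_dvd_natCast.mpr hc).trans h)
  have hn8 : 8 ≤ n := by
    by_contra hc
    have h7 : n = 7 := by omega
    have : r ∣ 7 := ⟨d, by omega⟩
    rcases (Nat.dvd_prime (by norm_num)).mp this with h | h <;> subst h <;> omega
  rcases Nat.mod_two_eq_zero_or_one n with h2 | h2
  · have hcase : ∀ p, p.Prime → 5 ≤ p → p ∣ n - 3 → r = 3 := by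
      intro p hp h5 hdv
      have h1 := Nat.le_of_dvd (by omega) hdv
      have h3 := bell_mod hp hn hd (by omega) (by omega) (j := 3) (by omega) (by omega) hdv
        (hE p (not_dvd5 (by omega) (by simp) hp h5 hdv))
      have : r ∣ 3 := ⟨_, h3.symm⟩
      rcases (Nat.dvd_prime (by norm_num)).mp this with h | h <;> omega
    rcases prime_or_pow (n - 3) (by omega) with ⟨p, hp, h5, hdv⟩ | ⟨a, ha⟩
    · have hr3 := hcase p hp h5 hdv
      subst hr3
      -- `n - 5` is a power of five
      have hpow : n - 5 = 5 ^ (n - 5).primeFactorsList.length := by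
        apply Nat.eq_prime_pow_of_unique_prime_dvd (by omega)
        intro q hq hqx
        by_contra hq5
        have h2' := hq.two_le
        have : q ≠ 2 := by rintro rfl; omega
        have : q ≠ 3 := by rintro rfl; omega
        have : q ≠ 4 := by rintro rfl; revert hq; decide
        have h1 := Nat.le_of_dvd (by omega) hqx
        have h3 := bell_mod hq hn hd (by omega) (by omega) (j := 5) (by omega) (by omega) hqx
          (hE q (not_dvd5 (by omega) (by simp) hq (by omega) hqx))
        omega
      generalize (n - 5).primeFactorsList.length = l at hpow
      have hl : 2 ≤ l := by
        by_contra hl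
        have : l = 0 ∨ l = 1 := by omega
        rcases this with rfl | rfl <;> simp at hpow <;> omega
      obtain ⟨m, rfl⟩ : ∃ m, l = m + 2 := ⟨l - 2, by omega⟩
      have h25 : n % 25 = 5 := by rw [pow_add] at hpow; omega
      have hp5 : Nat.Prime 5 := by norm_num
      obtain ⟨hd5, -, hb⟩ := bell_step 5 d 3 hp5 hd (by norm_num) (by omega)
        (hE 5 (not_dvd5 (j := 5) (by omega) (by simp) hp5 (by norm_num) (by omega)))
      have hm := Nat.pow_pos (n := m) (show 0 < 5 by norm_num)
      rw [pow_add] at hpow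
      obtain ⟨-, h6, -⟩ := bell_step 5 (d / 5) 3 hp5 (by omega) (by norm_num) (by omega) hb
      omega
    · have ha2 : 2 ≤ a := by
        by_contra hl
        have : a = 0 ∨ a = 1 := by omega
        rcases this with rfl | rfl <;> simp at ha <;> omega
      obtain ⟨m, rfl⟩ : ∃ m, a = m + 2 := ⟨a - 2, by omega⟩
      have h9 : n % 9 = 3 := by rw [pow_add] at ha; omega
      have hp3 : Nat.Prime 3 := by norm_num
      have h3E : ¬ ((3 : ℕ) : ℤ) ∣ evenD n := by
        intro hc
        have := evenD_mod n 3 4 (by simp) (by omega) 3 (by omega) hc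
        omega
      obtain ⟨hd3, h1, hb⟩ := bell_step 3 d r hp3 hd (by omega) (by omega) (hE 3 h3E)
      have hmod := mul_mod_lt h1
      rw [← hn] at hmod
      have h0 : d % 3 = 0 := by
        have : r * (d % 3) = 0 := by omega
        rcases Nat.mul_eq_zero.mp this with h | h <;> omega
      have hnd : n / 3 = r * (d / 3) := by
        obtain ⟨k, hk⟩ := Nat.dvd_of_mod_eq_zero h0
        rw [hn, hk, Nat.mul_div_cancel_left _ (by norm_num : 0 < 3),
          show r * (3 * k) = 3 * (r * k) by ring, Nat.mul_div_cancel_left _ (by norm_num : 0 < 3)]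
      have hd3' : d = 3 := by
        by_contra hne
        obtain ⟨-, h6, -⟩ := bell_step 3 (d / 3) r hp3 (by omega) (by omega) (by omega) hb
        have := mul_mod_lt h6
        rw [← hnd] at this
        have h7 : r * (d / 3 % 3) = 1 := by omega
        have := Nat.eq_one_of_mul_eq_one_right h7
        omega
      obtain ⟨q, hq, hqx⟩ := Nat.exists_prime_and_dvd (n := n - 5) (by omega)
      have h2' := hq.two_le
      have : q ≠ 2 := by rintro rfl; omega
      have : q ≠ 3 := by rintro rfl; omega
      have : q ≠ 4 := by rintro rfl; revert hq; decide
      have hle := Nat.le_of_dvd (by omega) hqx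
      obtain ⟨h8, -, -⟩ := bell_step q d r hq hd (by omega) (by omega)
        (hE q (not_dvd5 (by omega) (by simp) hq (by omega) hqx))
      omega
  · have hodd : ¬ 2 ∣ r := by
      rintro ⟨k, rfl⟩
      rw [hn, mul_assoc] at h2; omega
    rcases odd_case hn8 h2 with ⟨p, hp, h5, hdv⟩ | ⟨h31, p, hp, h5, hdv⟩
    · have h1 := Nat.le_of_dvd (by omega) hdv
      have h3 := bell_mod hp hn hd (by omega) (by omega) (j := 4) (by omega) (by omega) hdv
        (hE p (not_dvd5 (by omega) (by simp) hp h5 hdv))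
      have h4 : r ∣ 2 ^ 2 := ⟨_, h3.symm⟩
      obtain ⟨k, hk, rfl⟩ := (Nat.dvd_prime_pow Nat.prime_two).mp h4
      apply hodd
      apply dvd_pow_self
      rintro rfl
      omega
    · have h1 := Nat.le_of_dvd (by omega) hdv
      have h3 := bell_mod hp hn hd (by omega) (by omega) (j := 3) (by omega) (by omega) hdv
        (hE p (not_dvd5 (by omega) (by simp) hp h5 hdv))
      have : r ∣ 3 := ⟨_, h3.symm⟩
      rcases (Nat.dvd_prime (by norm_num)).mp this with h | h
      · omega
      · subst h; omega

lemma lucas_zero {p n m : ℕ} (hp : p.Prime) (h : n % p < m % p) : p ∣ n.choose m := by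
  have : Fact p.Prime := ⟨hp⟩
  have := Choose.choose_modEq_choose_mod_mul_choose_div_nat (p := p) (n := n) (k := m)
  rw [Nat.choose_eq_zero_of_lt h, zero_mul] at this
  exact (Nat.modEq_zero_iff_dvd).mp this

lemma intransitive_arith {n m : ℕ} (hn : 7 ≤ n) (hm : 1 ≤ m) (hmn : m < n)
    (h : (n.choose m : ℤ) ∣ evenD n) : False := by
  have hg : Nat.gcd (n.choose m) n ∣ 2 := by
    apply evenD_mod n 0 2 (by simp) (by omega)
    · exact Nat.gcd_dvd_right _ _
    · exact (Int.natCast_dvd_natCast.mpr (Nat.gcd_dvd_left _ _)).trans h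
  have h1 : n ∣ n.choose m * m := by
    obtain ⟨a, rfl⟩ : ∃ a, n = a + 1 := ⟨n - 1, by omega⟩
    obtain ⟨b, rfl⟩ : ∃ b, m = b + 1 := ⟨m - 1, by omega⟩
    exact ⟨_, (Nat.add_one_mul_choose_eq a b).symm⟩
  have h2 : n ∣ 2 * m := by
    have h3 : n ∣ Nat.gcd (n.choose m) n * m := by
      rw [← Nat.gcd_mul_right]
      exact Nat.dvd_gcd h1 (dvd_mul_right _ _)
    exact h3.trans (mul_dvd_mul_right hg m)
  have h3 : n = 2 * m := by
    obtain ⟨k, hk⟩ := h2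
    have : k = 1 := by
      rcases Nat.lt_or_ge k 2 with h | h
      · interval_cases k <;> omega
      · nlinarith
    subst this; omega
  have hE : ∀ p : ℕ, ¬ (p : ℤ) ∣ evenD n → ¬ p ∣ n.choose m := fun p hp hc =>
    hp ((Int.natCast_dvd_natCast.mpr hc).trans h)
  rcases prime_or_pow (n - 3) (by omega) with ⟨p, hp, h5, hdv⟩ | ⟨a, ha⟩
  · apply hE p (not_dvd5 (by omega) (by simp) hp h5 hdv)
    apply lucas_zero hp
    have h6 := mod_of_dvd_sub (by omega) (by omega) hdv
    rw [h6]
    by_contra hc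
    have h7 : (2 * (m % p)) % p = 3 := by
      rw [Nat.mul_mod, Nat.mod_mod, ← Nat.mul_mod, ← h3, h6]
    have h8 : m % p = 0 ∨ m % p = 1 ∨ m % p = 2 ∨ m % p = 3 := by omega
    rcases h8 with h | h | h | h <;> rw [h] at h7
    · simp at h7
    · rw [Nat.mod_eq_of_lt (by omega)] at h7; omega
    · rw [Nat.mod_eq_of_lt (by omega)] at h7; omega
    · rcases Nat.lt_or_ge (2 * 3) p with h9 | h9
      · rw [Nat.mod_eq_of_lt h9] at h7; omega
      · interval_cases p <;> omega
  · have ha2 : 2 ≤ a := by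
      by_contra hl
      have : a = 0 ∨ a = 1 := by omega
      rcases this with rfl | rfl <;> simp at ha <;> omega
    obtain ⟨c, rfl⟩ : ∃ c, a = c + 2 := ⟨a - 2, by omega⟩
    have h9 : n % 9 = 3 := by rw [pow_add] at ha; omega
    apply hE 3
    · intro hc
      have := evenD_mod n 3 4 (by simp) (by omega) 3 (by omega) hc
      omega
    · have : Fact (Nat.Prime 3) := ⟨by norm_num⟩
      have h10 := Choose.choose_modEq_choose_mod_mul_choose_div_nat (p := 3) (n := n) (k := m)
      have h11 : 3 ∣ (n / 3).choose (m / 3) := lucas_zero (by norm_num) (by omega)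
      exact (Nat.modEq_zero_iff_dvd).mp
        (h10.trans ((Nat.modEq_zero_iff_dvd).mpr (h11.mul_left _)))

lemma perm_apply_inv {α : Type*} (x : Equiv.Perm α) (a : α) : x (x⁻¹ a) = a := by simp

lemma perm_inv_apply {α : Type*} (x : Equiv.Perm α) (a : α) : x⁻¹ (x a) = a := by simp

lemma conj_mem {K : Type*} [Group K] [Finite K] (H : Subgroup K) {p : ℕ} (hp : p.Prime)
    (hi : ¬ p ∣ H.index) (g : K) (hg : orderOf g = p) : ∃ t : K, t⁻¹ * g * t ∈ H := by
  have : Fact p.Prime := ⟨hp⟩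
  have hP : IsPGroup p (Subgroup.zpowers g) := by
    apply IsPGroup.of_card (n := 1)
    rw [Nat.card_zpowers, hg, pow_one]
  obtain ⟨x, hx⟩ := hP.nonempty_fixed_point_of_prime_not_dvd_card (K ⧸ H) hi
  obtain ⟨t, rfl⟩ := QuotientGroup.mk_surjective x
  refine ⟨t, ?_⟩
  have h1 := hx ⟨g, Subgroup.mem_zpowers g⟩
  have h2 : ((g * t : K) : K ⧸ H) = (t : K ⧸ H) := h1
  have h3 := QuotientGroup.eq.mp h2.symm
  rwa [← mul_assoc] at h3

lemma cycle_in {n p : ℕ} (G : Subgroup (Equiv.Perm (Fin n))) (hp : p.Prime) (hpn : p ≤ n)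
    (hi : ¬ p ∣ G.index) : ∃ g ∈ G, g.IsCycle ∧ g.support.card = p := by
  obtain ⟨g, hg⟩ := (Equiv.Perm.exists_with_cycleType_iff (Fin n) (m := {p})).mpr
    ⟨by simpa using hpn, by simpa using hp.two_le⟩
  have hc : g.IsCycle := by rw [← Equiv.Perm.card_cycleType_eq_one, hg]; simp
  have hs : g.support.card = p := by rw [← Equiv.Perm.sum_cycleType, hg]; simp
  obtain ⟨t, ht⟩ := conj_mem G hp hi g (by rw [hc.orderOf, hs])
  refine ⟨_, ht, ?_, ?_⟩
  · simpa using hc.conj (g := t⁻¹)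
  · have := Equiv.Perm.card_support_conj (σ := t⁻¹) (τ := g)
    rw [inv_inv] at this
    rw [this, hs]

section Jordan
variable {α : Type*} [Fintype α] [DecidableEq α]

/-- permutations fixing every point outside `S` -/
def fixOut (S : Finset α) : Subgroup (Equiv.Perm α) where
  carrier := {f | ∀ a, ¬ a ∈ S → f a = a}
  mul_mem' {f g} hf hg := fun a ha => by
    rw [Equiv.Perm.mul_apply, hg a ha, hf a ha]
  one_mem' := fun a _ => rfl
  inv_mem' {f} hf := fun a ha => by
    rw [Equiv.Perm.inv_eq_iff_eq, hf a ha]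

lemma mem_fixOut {S : Finset α} {f : Equiv.Perm α} : f ∈ fixOut S ↔ ∀ a, ¬ a ∈ S → f a = a :=
  Iff.rfl

lemma card_fixOut (S : Finset α) : Nat.card (fixOut S) = S.card.factorial := by
  have := Nat.card_congr (Equiv.Perm.subtypeEquivSubtypePerm (fun a => a ∈ S))
  rw [Nat.card_perm] at this
  simp only [Nat.card_eq_fintype_card, Fintype.card_coe] at this
  rw [this, ← Nat.card_eq_fintype_card]
  rfl

lemma normalizer_lift (G : Subgroup (Equiv.Perm α)) {p : ℕ} (hp : p.Prime) {g : Equiv.Perm α}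
    (hgc : g.IsCycle) (hgp : g.support.card = p) (hg : g ∈ G)
    (htr : MulAction.IsMultiplyPretransitive G α (g.supportᶜ).card)
    (x : Equiv.Perm α) (hx : ∀ a ∈ g.support, x a = a) :
    ∃ y ∈ G, (∃ e : ℤ, y * g * y⁻¹ = g ^ e) ∧ ∀ d ∉ g.support, y d = x d := by
  have hxΔ : ∀ d, d ∉ g.support → x d ∉ g.support := by
    intro d hd hc
    have := hx _ hc
    rw [x.injective this] at hc
    exact hd hc
  have hxΔ' : ∀ d, d ∉ g.support → ∃ d', d' ∉ g.support ∧ x d' = d := by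
    intro d hd
    refine ⟨x⁻¹ d, fun hc => hd ?_, by simp⟩
    have := hx _ hc
    rw [perm_apply_inv] at this
    rw [this]; exact hc
  obtain ⟨y, hyG, hy⟩ : ∃ y ∈ G, ∀ d ∉ g.support, y d = x d := by
    let e : Fin (g.supportᶜ).card ↪ α :=
      ⟨fun i => ((g.supportᶜ).equivFin.symm i : α), fun i j h => by simpa using h⟩
    have := htr
    obtain ⟨y, hy⟩ := MulAction.exists_smul_eq G e (e.trans x.toEmbedding)
    refine ⟨y, y.2, fun d hd => ?_⟩
    have h1 := DFunLike.congr_fun hy ((g.supportᶜ).equivFin ⟨d, by simpa using hd⟩)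
    have h3 : e ((g.supportᶜ).equivFin ⟨d, by simpa using hd⟩) = d := by
      change (((g.supportᶜ).equivFin.symm ((g.supportᶜ).equivFin ⟨d, _⟩) : _) : α) = d
      rw [Equiv.symm_apply_apply]
    have h2 : (y : Equiv.Perm α) (e ((g.supportᶜ).equivFin ⟨d, by simpa using hd⟩)) =
      x (e ((g.supportᶜ).equivFin ⟨d, by simpa using hd⟩)) := h1
    rwa [h3] at h2
  have hg0 : ∀ d ∉ g.support, g d = d := fun d hd => by simpa using hd
  let K : Subgroup (Equiv.Perm α) := G ⊓ fixOut g.support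
  have hgK : g ∈ K := ⟨hg, hg0⟩
  have hyK : y * g * y⁻¹ ∈ K := by
    refine ⟨G.mul_mem (G.mul_mem hyG hg) (G.inv_mem hyG), fun d hd => ?_⟩
    obtain ⟨d', hd', rfl⟩ := hxΔ' d hd
    have : y⁻¹ (x d') = d' := by rw [Equiv.Perm.inv_eq_iff_eq, hy d' hd']
    rw [Equiv.Perm.mul_apply, Equiv.Perm.mul_apply, this, hg0 d' hd', hy d' hd']
  have hord : orderOf g = p := by rw [hgc.orderOf, hgp]
  have hidx : ¬ p ∣ (Subgroup.zpowers (⟨g, hgK⟩ : K)).index := by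
    intro hc
    have h1 := (Subgroup.zpowers (⟨g, hgK⟩ : K)).card_mul_index
    rw [Nat.card_zpowers, Subgroup.orderOf_mk, hord] at h1
    have h2 : Nat.card K ∣ p.factorial := by
      rw [← hgp, ← card_fixOut g.support]
      exact Subgroup.card_dvd_of_le inf_le_right
    have h3 : p * p ∣ p.factorial := (mul_dvd_mul_left p hc).trans (h1 ▸ h2)
    rw [← Nat.mul_factorial_pred hp.ne_zero] at h3
    have h4 := Nat.dvd_of_mul_dvd_mul_left hp.pos h3
    have := (hp.dvd_factorial).mp h4
    have := hp.pos
    omega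
  obtain ⟨k, hk⟩ := conj_mem (Subgroup.zpowers (⟨g, hgK⟩ : K)) hp hidx ⟨y * g * y⁻¹, hyK⟩ (by
    rw [Subgroup.orderOf_mk, ← hord]
    exact orderOf_injective (MulAut.conj y).toMonoidHom (MulAut.conj y).injective g)
  obtain ⟨e, he⟩ := Subgroup.mem_zpowers_iff.mp hk
  have he' : g ^ e = (k : Equiv.Perm α)⁻¹ * (y * g * y⁻¹) * k := by
    simpa using congrArg (Subtype.val) he
  refine ⟨(k : Equiv.Perm α)⁻¹ * y, G.mul_mem (G.inv_mem k.2.1) hyG, ⟨e, ?_⟩, ?_⟩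
  · rw [he']; group
  · intro d hd
    rw [Equiv.Perm.mul_apply, hy d hd]
    exact (fixOut g.support).inv_mem k.2.2 _ (hxΔ d hd)

lemma jordan_prime (G : Subgroup (Equiv.Perm α)) (hG : MulAction.IsPreprimitive G α)
    {p : ℕ} (hp : p.Prime) (hp' : p + 3 ≤ Fintype.card α) {g : Equiv.Perm α}
    (hgc : g.IsCycle) (hgp : g.support.card = p) (hg : g ∈ G) : alternatingGroup α ≤ G := by
  have hcompl : (g.supportᶜ).card = Fintype.card α - p := by rw [Finset.card_compl, hgp]
  obtain ⟨m, hm⟩ : ∃ m, (g.supportᶜ).card = m + 1 := ⟨Fintype.card α - p - 1, by omega⟩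
  have hp2 := hp.two_le
  have htr : MulAction.IsMultiplyPretransitive G α (g.supportᶜ).card := by
    rw [hm]
    have hprim : MulAction.IsMultiplyPreprimitive G α (m + 2) := by
      apply hG.isMultiplyPreprimitive (s := (g.support : Set α)ᶜ)
      · rw [← Finset.coe_compl, Set.ncard_coe_finset, hm]
      · rw [Nat.card_eq_fintype_card]; omega
      have := Equiv.Perm.isPretransitive_of_isCycle_mem hgc hg
      apply MulAction.IsPreprimitive.of_prime_card
      convert! hp
      have hiff : ∀ x, x ∈ SubMulAction.ofFixingSubgroup G ((g.support : Set α)ᶜ) ↔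
          x ∈ g.support := by
        intro x
        simp [SubMulAction.mem_ofFixingSubgroup_iff]
      refine (Nat.card_congr (Equiv.subtypeEquivRight hiff)).trans ?_
      rw [Nat.card_eq_fintype_card, Fintype.card_coe, hgp]
    have : MulAction.IsMultiplyPretransitive G α (m + 2) :=
      MulAction.IsMultiplyPreprimitive.isMultiplyPretransitive ..
    exact MulAction.isMultiplyPretransitive_of_le (n := m + 2) (by omega)
      (by rw [Nat.card_eq_fintype_card]; omega)
  obtain ⟨a, b, c, ha, hb, hc, hab, hac, hbc⟩ :=
    (Finset.two_lt_card_iff (s := g.supportᶜ)).mp (by omega)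
  rw [Finset.mem_compl] at ha hb hc
  have hswap : ∀ u v, u ∉ g.support → v ∉ g.support →
      ∀ s ∈ g.support, Equiv.swap u v s = s := by
    intro u v hu hv s hs
    apply Equiv.swap_apply_of_ne_of_ne
    · rintro rfl; exact hu hs
    · rintro rfl; exact hv hs
  set x₁ := Equiv.swap a b with hx₁
  set x₂ := Equiv.swap a c with hx₂
  have f₁ : ∀ s ∈ g.support, x₁ s = s := hswap a b ha hb
  have f₂ : ∀ s ∈ g.support, x₂ s = s := hswap a c ha hc
  have hΔ : ∀ x : Equiv.Perm α, (∀ s ∈ g.support, x s = s) →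
      ∀ d, d ∉ g.support → x d ∉ g.support := by
    intro x hx d hd hc
    have := hx _ hc
    rw [x.injective this] at hc
    exact hd hc
  obtain ⟨y₁, hy₁G, ⟨e₁, he₁⟩, hy₁⟩ := normalizer_lift G hp hgc hgp hg htr x₁ f₁
  obtain ⟨y₂, hy₂G, ⟨e₂, he₂⟩, hy₂⟩ := normalizer_lift G hp hgc hgp hg htr x₂ f₂
  have hc12 : (y₁ * y₂) * g * (y₁ * y₂)⁻¹ = (y₂ * y₁) * g * (y₂ * y₁)⁻¹ := by
    have h1 : (y₁ * y₂) * g * (y₁ * y₂)⁻¹ = g ^ (e₁ * e₂) := by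
      calc (y₁ * y₂) * g * (y₁ * y₂)⁻¹ = y₁ * (y₂ * g * y₂⁻¹) * y₁⁻¹ := by group
        _ = (y₁ * g * y₁⁻¹) ^ e₂ := by rw [he₂, conj_zpow]
        _ = _ := by rw [he₁, ← zpow_mul]
    have h2 : (y₂ * y₁) * g * (y₂ * y₁)⁻¹ = g ^ (e₂ * e₁) := by
      calc (y₂ * y₁) * g * (y₂ * y₁)⁻¹ = y₂ * (y₁ * g * y₁⁻¹) * y₂⁻¹ := by group
        _ = (y₂ * g * y₂⁻¹) ^ e₁ := by rw [he₁, conj_zpow]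
        _ = _ := by rw [he₂, ← zpow_mul]
    rw [h1, h2, mul_comm]
  set z := (y₂ * y₁)⁻¹ * (y₁ * y₂) with hz
  have hzG : z ∈ G := G.mul_mem (G.inv_mem (G.mul_mem hy₂G hy₁G)) (G.mul_mem hy₁G hy₂G)
  have hzc : Commute z g := by
    have h1 : z * g * z⁻¹ = g := by
      calc z * g * z⁻¹ = (y₂ * y₁)⁻¹ * ((y₁ * y₂) * g * (y₁ * y₂)⁻¹) * (y₂ * y₁) := by
            rw [hz]; group
        _ = g := by rw [hc12]; group
    exact mul_inv_eq_iff_eq_mul.mp h1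
  set X := (x₁ * x₂) * (x₁ * x₂) with hX
  have hX3 : X.IsThreeCycle := (Equiv.Perm.isThreeCycle_swap_mul_swap_same hab hac hbc).isThreeCycle_sq
  have hXs : ∀ s ∈ g.support, X s = s := by
    intro s hs
    simp only [hX, Equiv.Perm.mul_apply, f₁ s hs, f₂ s hs]
  have hzΔ : ∀ d ∉ g.support, z d = X d := by
    intro d hd
    rw [hz, Equiv.Perm.mul_apply, Equiv.Perm.inv_eq_iff_eq, Equiv.Perm.mul_apply,
      Equiv.Perm.mul_apply, hy₂ d hd, hy₁ _ (hΔ x₂ f₂ d hd), hy₁ _ (hΔ X hXs d hd),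
      hy₂ _ (hΔ x₁ f₁ _ (hΔ X hXs d hd))]
    simp [hX, hx₁, hx₂, Equiv.Perm.mul_apply]
  obtain ⟨s, hs⟩ := hgc.nonempty_support
  have hzs : g (z s) ≠ z s := by
    have : g (z s) = z (g s) := by
      rw [← Equiv.Perm.mul_apply, ← Equiv.Perm.mul_apply, hzc.eq]
    rw [this]
    intro h
    exact (Equiv.Perm.mem_support.mp hs) (z.injective h)
  obtain ⟨j, hj⟩ := hgc.exists_zpow_eq (Equiv.Perm.mem_support.mp hs) hzs
  have hw : g ^ (-j) * z = X := by
    have hwc : Commute (g ^ (-j) * z) g := ((Commute.refl g).zpow_left _).mul_left hzc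
    have hws : (g ^ (-j) * z) s = s := by
      rw [Equiv.Perm.mul_apply, ← hj, zpow_neg, perm_inv_apply]
    refine Equiv.ext fun t => ?_
    by_cases ht : t ∈ g.support
    · rw [hXs t ht]
      obtain ⟨i, rfl⟩ := hgc.exists_zpow_eq (Equiv.Perm.mem_support.mp hs)
        (Equiv.Perm.mem_support.mp ht)
      rw [← Equiv.Perm.mul_apply, (hwc.zpow_right i).eq, Equiv.Perm.mul_apply, hws]
    · rw [Equiv.Perm.mul_apply, hzΔ t ht]
      have : g (X t) = X t := by simpa using hΔ X hXs t ht
      exact Equiv.Perm.zpow_apply_eq_self_of_apply_eq_self this _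
  apply Equiv.Perm.alternatingGroup_le_of_isPreprimitive_of_isThreeCycle_mem hG hX3
  rw [← hw]
  exact G.mul_mem (G.zpow_mem hg _) hzG

lemma fiber_card {ι : Type*} [Fintype ι] [DecidableEq ι] (f : α → ι) (H : Subgroup (Equiv.Perm α))
    (hH : ∀ g ∈ H, ∀ x, f (g x) = f x) :
    Nat.card H ∣ ∏ i, (Fintype.card {a // f a = i}).factorial := by
  let F : Subgroup (Equiv.Perm α) :=
    { carrier := {g | f ∘ g = f}
      mul_mem' := fun {a b} ha hb => by
        funext x
        have h1 := congrFun ha (b x)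
        have h2 := congrFun hb x
        simp only [Function.comp_apply] at h1 h2 ⊢
        rw [Equiv.Perm.mul_apply, h1, h2]
      one_mem' := rfl
      inv_mem' := fun {a} ha => by
        funext x
        have h1 := congrFun ha (a⁻¹ x)
        simp only [Function.comp_apply, perm_apply_inv] at h1 ⊢
        exact h1.symm }
  rw [← DomMulAct.stabilizer_card f, ← Nat.card_eq_fintype_card]
  have h1 : H ≤ F := fun g hg => funext fun x => hH g hg x
  exact Subgroup.card_dvd_of_le h1

end Jordan

lemma dvd_of_card {n x N : ℕ} (G : Subgroup (Equiv.Perm (Fin n))) (h : Nat.card G ∣ x)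
    (hN : N * x = n.factorial) : N ∣ G.index := by
  have h1 := G.card_mul_index
  rw [Nat.card_perm, Nat.card_fin] at h1
  obtain ⟨y, rfl⟩ := h
  refine ⟨y, Nat.eq_of_mul_eq_mul_left (Nat.card_pos (α := G)) ?_⟩
  rw [h1, ← hN]; ring

lemma transitive_of {n : ℕ} (hn : 7 ≤ n) (G : Subgroup (Equiv.Perm (Fin n)))
    (h : (G.index : ℤ) ∣ evenD n) : MulAction.IsPretransitive G (Fin n) := by
  classical
  let a : Fin n := ⟨0, by omega⟩
  rw [MulAction.isPretransitive_iff_base a]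
  by_contra hcon
  push Not at hcon
  obtain ⟨b, hb⟩ := hcon
  let O : Finset (Fin n) := Finset.univ.filter (fun x => ∃ g ∈ G, g a = x)
  have haO : a ∈ O := by simp only [O, Finset.mem_filter, Finset.mem_univ, true_and]; exact ⟨1, G.one_mem, rfl⟩
  have hbO : b ∉ O := by
    simp only [O, Finset.mem_filter, Finset.mem_univ, true_and]
    rintro ⟨g, hg, hgb⟩
    exact hb ⟨g, hg⟩ hgb
  have hinv : ∀ g ∈ G, ∀ x, (decide (g x ∈ O)) = decide (x ∈ O) := by
    intro g hg x
    rw [decide_eq_decide]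
    simp only [O, Finset.mem_filter, Finset.mem_univ, true_and]
    constructor
    · rintro ⟨k, hk, hkx⟩
      exact ⟨g⁻¹ * k, G.mul_mem (G.inv_mem hg) hk, by rw [Equiv.Perm.mul_apply, hkx]; simp⟩
    · rintro ⟨k, hk, hkx⟩
      exact ⟨g * k, G.mul_mem hg hk, by rw [Equiv.Perm.mul_apply, hkx]⟩
  have h1 := fiber_card (fun x => decide (x ∈ O)) G hinv
  have hle : O.card ≤ n := by simpa using O.card_le_univ
  have hO1 : Fintype.card {x // decide (x ∈ O) = true} = O.card := by
    simp
  have hO2 : Fintype.card {x // decide (x ∈ O) = false} = n - O.card := by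
    have h0 : Finset.univ.filter (fun x => decide (x ∈ O) = false) = Oᶜ := by
      ext x; simp
    rw [Fintype.card_subtype, h0, Finset.card_compl, Fintype.card_fin]
  rw [Fintype.prod_bool, hO1, hO2] at h1
  have hlt : O.card < n := by
    have := Finset.card_lt_univ_of_notMem hbO
    simpa using this
  have h2 := dvd_of_card G h1 (N := n.choose O.card)
    (by rw [← mul_assoc, Nat.choose_mul_factorial_mul_factorial hle])
  exact intransitive_arith hn (Finset.card_pos.mpr ⟨a, haO⟩) hlt
    ((Int.natCast_dvd_natCast.mpr h2).trans h)

open Pointwise in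
lemma primitive_of {n : ℕ} (hn : 7 ≤ n) (G : Subgroup (Equiv.Perm (Fin n)))
    (h : (G.index : ℤ) ∣ evenD n) : MulAction.IsPreprimitive G (Fin n) := by
  classical
  have htr := transitive_of hn G h
  by_contra hnp
  obtain ⟨B, hB, hBt⟩ : ∃ B : Set (Fin n), MulAction.IsBlock G B ∧ ¬ MulAction.IsTrivialBlock B := by
    by_contra hcon
    push Not at hcon
    exact hnp ⟨fun {B} hB => hcon B hB⟩
  rw [MulAction.IsTrivialBlock, not_or] at hBt
  have hBn : B.Nontrivial := Set.not_subsingleton_iff.mp hBt.1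
  obtain ⟨b, hb⟩ := hBn.nonempty
  have hcard := hB.ncard_block_mul_ncard_orbit_eq hBn.nonempty
  rw [Nat.card_fin] at hcard
  set d := B.ncard with hd
  set r := (MulAction.orbit G B).ncard with hr
  have hd2 : 2 ≤ d := (Set.one_lt_ncard).mpr hBn
  have hdn : d < n := by
    have h1 := Set.ncard_lt_card hBt.2
    rwa [Nat.card_fin] at h1
  have hr2 : 2 ≤ r := by
    by_contra hc
    have : r = 0 ∨ r = 1 := by omega
    rcases this with h | h <;> rw [h] at hcard <;> omega
  let φ : G →* Equiv.Perm (MulAction.orbit G B) := MulAction.toPermHom G (MulAction.orbit G B)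
  -- the block of a point
  have hex : ∀ x : Fin n, ∃ g : G, x ∈ g • B := by
    intro x
    obtain ⟨g, hg⟩ := MulAction.exists_smul_eq G b x
    exact ⟨g, hg ▸ Set.smul_mem_smul_set hb⟩
  choose γ hγ using hex
  let f : Fin n → MulAction.orbit G B := fun x => ⟨γ x • B, MulAction.mem_orbit _ _⟩
  have hf : ∀ x (c : MulAction.orbit G B), f x = c ↔ x ∈ (c : Set (Fin n)) := by
    rintro x ⟨c, g, rfl⟩
    constructor
    · intro h
      have := congrArg Subtype.val h
      simp only [f] at this
      simp only
      rw [← this]; exact hγ x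
    · intro hx
      apply Subtype.ext
      exact (MulAction.isBlock_iff_smul_eq_smul_of_nonempty.mp hB) ⟨x, hγ x, hx⟩
  have hker : ∀ g ∈ φ.ker.map G.subtype, ∀ x, f (g x) = f x := by
    rintro _ ⟨g, hg, rfl⟩ x
    rw [hf]
    have h1 : g • f x = f x := by
      have := DFunLike.congr_fun (MonoidHom.mem_ker.mp hg) (f x)
      exact this
    have h2 : g • (f x : Set (Fin n)) = f x := congrArg Subtype.val h1
    rw [← h2]
    exact Set.smul_mem_smul_set ((hf x _).mp rfl)
  have h1 := fiber_card f _ hker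
  have hfib : ∀ c : MulAction.orbit G B, Fintype.card {x // f x = c} = d := by
    rintro ⟨c, g, rfl⟩
    have h2 : ∀ x, f x = ⟨g • B, g, rfl⟩ ↔ x ∈ g • B := fun x => hf x _
    rw [← Nat.card_eq_fintype_card, Nat.card_congr (Equiv.subtypeEquivRight h2)]
    change (g • B).ncard = _
    rw [hd]
    exact Set.ncard_image_of_injective _ (MulAction.injective g)
  have hrc : Fintype.card (MulAction.orbit G B) = r := by
    rw [← Nat.card_eq_fintype_card]; rfl
  rw [Finset.prod_congr rfl (fun c _ => by rw [hfib c]), Finset.prod_const, Finset.card_univ,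
    hrc] at h1
  rw [Nat.card_congr (φ.ker.equivMapOfInjective _ G.subtype_injective).toEquiv.symm] at h1
  have h2 : Nat.card φ.range ∣ r.factorial := by
    have := Subgroup.card_subgroup_dvd_card φ.range
    rwa [Nat.card_perm, show Nat.card (MulAction.orbit G B) = r from rfl] at this
  have h3 : Nat.card G ∣ d.factorial ^ r * r.factorial := by
    rw [← φ.ker.card_mul_index, Subgroup.index_ker]
    exact mul_dvd_mul h1 h2
  have h4 := dvd_of_card G h3 (N := Nat.uniformBell r d) (by
    rw [← mul_assoc, Nat.uniformBell_mul_eq r (by omega), mul_comm r d, hcard])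
  exact imprimitive_arith hn (by rw [mul_comm]; exact hcard.symm) hd2 hr2
    ((Int.natCast_dvd_natCast.mpr h4).trans h)

lemma ge_alt {n : ℕ} (hn : 8 ≤ n) (G : Subgroup (Equiv.Perm (Fin n)))
    (h : (G.index : ℤ) ∣ evenD n) : alternatingGroup (Fin n) ≤ G := by
  obtain ⟨p, hp, -, hpn, hpE⟩ := exists_prime_jordan hn
  obtain ⟨g, hg, hc, hs⟩ := cycle_in G hp (by omega)
    (fun hd => hpE ((Int.natCast_dvd_natCast.mpr hd).trans h))
  exact jordan_prime G (primitive_of (by omega) G h) hp (by simpa using hpn) hc hs hg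

lemma eq_alt {n : ℕ} (hn : 7 ≤ n) (G : Subgroup (Equiv.Perm (Fin n)))
    (hA : alternatingGroup (Fin n) ≤ G) (hG : G ≠ ⊤) : G = alternatingGroup (Fin n) := by
  have : Nontrivial (Fin n) := Fin.nontrivial_iff_two_le.mpr (by omega)
  have h1 := Subgroup.relIndex_mul_index hA
  rw [alternatingGroup.index_eq_two] at h1
  have h2 : G.index ∣ 2 := ⟨_, by rw [mul_comm]; exact h1.symm⟩
  rcases (Nat.dvd_prime Nat.prime_two).mp h2 with h | h
  · exact absurd (Subgroup.index_eq_one.mp h) hG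
  · rw [h] at h1
    have : (alternatingGroup (Fin n)).relIndex G = 1 := by omega
    exact le_antisymm (Subgroup.relIndex_eq_one.mp this) hA


/-- translation by `e` on `Fin 7` -/
def rot7 (e : Fin 7) : Equiv.Perm (Fin 7) :=
  ⟨fun x => x + e, fun x => x - e, by revert e; decide, by revert e; decide⟩

/-- the function of the word `rot e₁ * t * rot e₂ * t * ⋯` -/
def wordFun (t : Fin 7 → Fin 7) (w : List (Fin 7)) (x : Fin 7) : Fin 7 :=
  w.foldr (fun e y => t y + e) x

/-- the permutation `rot e₁ * t * rot e₂ * t * ⋯` -/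
def wordPerm (t : Equiv.Perm (Fin 7)) (w : List (Fin 7)) : Equiv.Perm (Fin 7) :=
  w.foldr (fun e p => rot7 e * t * p) 1

lemma wordPerm_apply (t : Equiv.Perm (Fin 7)) (w : List (Fin 7)) (x : Fin 7) :
    wordPerm t w x = wordFun t w x := by
  induction w with
  | nil => rfl
  | cons e w ih =>
    change rot7 e (t (wordPerm t w x)) = t (wordFun t w x) + e
    rw [ih]; rfl

lemma wordPerm_mem (G : Subgroup (Equiv.Perm (Fin 7))) (t : Equiv.Perm (Fin 7))
    (hc : ∀ e, rot7 e ∈ G) (ht : t ∈ G) (w : List (Fin 7)) : wordPerm t w ∈ G := by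
  induction w with
  | nil => exact G.one_mem
  | cons e w ih => exact G.mul_mem (G.mul_mem (hc e) ht) ih

/-- the function of the double transposition `(a b)(p q)` -/
def dsw (a b p q x : Fin 7) : Fin 7 :=
  if x = a then b else if x = b then a else if x = p then q else if x = q then p else x

def words3 : List (List (Fin 7)) := [[1, 1], [2, 2], [3, 3], [1, 3], [1, 5], [1, 6]]

def wordsA : List (List (Fin 7)) :=
  [[0], [3, 3], [3, 6], [0, 4, 3], [0, 6, 1], [1, 5, 4], [1, 5, 5], [1, 6, 0], [4, 3, 0],
   [5, 5, 1], [5, 6, 6], [0, 1, 2, 1]]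

def wordsB : List (List (Fin 7)) :=
  [[0], [4, 1], [4, 4], [0, 1, 6], [0, 3, 4], [1, 3, 5], [1, 5, 5], [1, 6, 0], [4, 5, 1],
   [5, 5, 1], [5, 6, 6], [0, 1, 2, 1]]

lemma stepA : ∀ b : Fin 7, b ≠ 0 → ∀ p : Fin 7, p ≠ 0 → p ≠ b → ∀ q : Fin 7, q ≠ 0 → q ≠ b → q ≠ p →
    (∃ w ∈ words3, (Finset.univ.filter (fun x => wordFun (dsw 0 b p q) w x ≠ x)).card = 3) ∨
    (∃ w ∈ wordsA, ∀ x, wordFun (dsw 0 b p q) w x = dsw 0 1 4 6 x) ∨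
    (∃ w ∈ wordsB, ∀ x, wordFun (dsw 0 b p q) w x = dsw 0 6 3 1 x) := by
  decide +kernel

def wordsT : List (List (Fin 7)) :=
  [
   [], [0, 4, 5], [6, 6], [1, 3], [5, 1], [6], [0], [3, 4],
   [1, 3, 4], [0, 6], [2, 3], [6, 1], [0, 1], [1], [5, 5], [1, 6, 6],
   [1, 6], [3, 3], [4, 3], [1, 1], [2], [6, 5], [1, 3, 3], [2, 6],
   [3, 6], [5, 3], [2, 1], [3], [6, 4], [4, 3, 4], [4, 6, 6], [4, 6],
   [6, 3], [3, 1], [4], [0, 4], [6, 0], [4, 3, 3], [5, 6], [0, 3],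
   [4, 1], [5]
  ]

lemma stepT : ∀ i j : Fin 7, i ≠ j → ∃ w ∈ wordsT,
    wordFun (dsw 0 1 4 6) w 0 = i ∧ wordFun (dsw 0 1 4 6) w 1 = j := by
  decide +kernel

def wordsP : List (List (Fin 7) × List (Fin 7)) :=
  [
   ([3, 4], [3, 4]), ([3, 6], [1, 4]), ([4, 3], [1, 4]), ([1, 4], [4, 3]),
   ([3, 6, 4], [6, 2]), ([2, 6, 3], [5, 1]), ([3, 6], [5, 6, 3]), ([4, 3], [1, 4, 1]),
   ([3, 6, 1], [1, 4]), ([3, 4], [0, 6, 6]), ([3, 4], [1, 4, 5]), ([3, 4], [2, 3, 6]),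
   ([5, 1], [3, 6, 0]), ([5, 1], [1, 4, 0]), ([5, 1], [1, 6, 4]), ([6, 2], [1, 4, 6]),
   ([1, 4, 1], [5, 6, 3]), ([1, 3, 6], [3, 6, 0]), ([4, 3], [4, 3]), ([3, 6], [3, 6]),
   ([5, 6, 3], [3, 6]), ([3, 6], [3, 6, 1]), ([1, 4, 5], [3, 4]), ([1, 4, 0], [5, 1]),
   ([4, 3], [3, 6, 1]), ([3, 6, 1], [4, 3]), ([3, 4], [3, 6, 3]), ([0, 3, 6], [6, 2]),
   ([4, 6, 1], [4, 6, 1]), ([1, 4, 5], [1, 4, 5]), ([3, 6, 4], [3, 6, 4]), ([1, 3, 6], [1, 3, 6]),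
   ([1, 6, 4], [1, 6, 4]), ([1, 6, 4], [5, 6, 2]), ([4, 6, 1], [2, 6, 5]), ([3, 6, 4], [2, 6, 5]),
   ([3, 6, 4], [4, 6, 1]), ([1, 3, 6], [1, 6, 4]), ([1, 3, 6], [5, 6, 2]), ([4, 6, 1], [3, 6, 4]),
   ([1, 3, 6], [2, 6, 3]), ([4, 6, 1], [1, 4, 6]), ([1, 6, 4], [2, 6, 3]), ([1, 6, 4], [1, 3, 6]),
   ([3, 6, 4], [1, 4, 6]), ([5], [2]), ([2], [1, 5]), ([2], [3, 3, 6]),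
   ([4, 1], [6, 3]), ([6, 3], [4, 1]), ([4, 1], [3, 6, 6]), ([1, 3, 4], [3, 4]),
   ([6, 2], [2, 6, 5]), ([5, 1], [5, 6, 2]), ([6, 2], [4, 6, 1]), ([3, 4], [1, 3, 4]),
   ([4, 1], [0, 3, 6, 6])
  ]

lemma stepU : ∀ P ∈ wordsP, (∀ x, wordFun (dsw 0 1 4 6) P.1 (wordFun (dsw 0 1 4 6) P.1
      (wordFun (dsw 0 1 4 6) P.1 x)) = x) ∧
    ∃ f, ∀ x, wordFun (dsw 0 1 4 6) P.1 x = x ↔ x = f := by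
  decide +kernel

/-- the function with the given values -/
def fn7 (x₂ x₃ x₄ x₅ x₆ : Fin 7) (x : Fin 7) : Fin 7 :=
  if x = 0 then 0 else if x = 1 then 1 else if x = 2 then x₂ else if x = 3 then x₃ else
    if x = 4 then x₄ else if x = 5 then x₅ else x₆

set_option synthInstance.maxSize 2000 in
set_option synthInstance.maxHeartbeats 400000 in
lemma stepB : ∀ x₂ : Fin 7, x₂ ∉ [0, 1] → ∀ x₃ : Fin 7, x₃ ∉ [0, 1, x₂] →
    ∀ x₄ : Fin 7, x₄ ∉ [0, 1, x₂, x₃] → ∀ x₅ : Fin 7, x₅ ∉ [0, 1, x₂, x₃, x₄] →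
    ∀ x₆ : Fin 7, x₆ ∉ [0, 1, x₂, x₃, x₄, x₅] →
    ∃ P ∈ wordsP, ∀ x, wordFun (dsw 0 1 4 6) P.1 (fn7 x₂ x₃ x₄ x₅ x₆ x) =
      fn7 x₂ x₃ x₄ x₅ x₆ (wordFun (dsw 0 1 4 6) P.2 x) := by
  decide +kernel


lemma dsw_eq {a b p q : Fin 7} (hpa : p ≠ a) (hpb : p ≠ b) (hqa : q ≠ a) (hqb : q ≠ b) :
    ⇑(Equiv.swap a b * Equiv.swap p q) = dsw a b p q := by
  funext x
  rw [Equiv.Perm.mul_apply, dsw]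
  simp only [Equiv.swap_apply_def]
  split_ifs <;> simp_all

lemma rot7_mem (G : Subgroup (Equiv.Perm (Fin 7))) (h : rot7 1 ∈ G) (e : Fin 7) : rot7 e ∈ G := by
  have : ∀ e : Fin 7, rot7 e = (rot7 1) ^ (e : ℕ) := by decide +kernel
  rw [this]; exact G.pow_mem h _

lemma exists_double (G : Subgroup (Equiv.Perm (Fin 7))) (h4 : 4 ∣ Nat.card G) :
    ∃ a b p q : Fin 7, b ≠ a ∧ p ≠ a ∧ p ≠ b ∧ q ≠ a ∧ q ≠ b ∧ q ≠ p ∧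
      Equiv.swap a b * Equiv.swap p q ∈ G := by
  let φ : G →* ℤˣ := Equiv.Perm.sign.comp G.subtype
  have h1 := φ.ker.card_mul_index
  rw [Subgroup.index_ker] at h1
  have h2 : Nat.card φ.range ∣ 2 := by
    have := Subgroup.card_subgroup_dvd_card φ.range
    simpa using this
  have h3 : 2 ∣ Nat.card φ.ker := by
    rw [← h1] at h4
    have h5 : 2 * 2 ∣ Nat.card φ.ker * 2 := h4.trans (mul_dvd_mul_left _ h2)
    exact Nat.dvd_of_mul_dvd_mul_right two_pos h5
  have : Fact (Nat.Prime 2) := ⟨Nat.prime_two⟩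
  obtain ⟨x, hx⟩ := exists_prime_orderOf_dvd_card' 2 h3
  set t : Equiv.Perm (Fin 7) := ((x : G) : Equiv.Perm (Fin 7)) with ht
  have hto : orderOf t = 2 := by rw [ht, Subgroup.orderOf_coe, Subgroup.orderOf_coe, hx]
  have hts : Equiv.Perm.sign t = 1 := MonoidHom.mem_ker.mp x.2
  have htG : t ∈ G := (x : G).2
  obtain ⟨k, hk⟩ := Equiv.Perm.cycleType_prime_order (σ := t) (by rw [hto]; exact Nat.prime_two)
  rw [hto] at hk
  have hsum : (k + 1) * 2 ≤ 7 := by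
    have := Equiv.Perm.sum_cycleType_le t
    rw [hk] at this
    simp at this
    omega
  have hk1 : k = 1 := by
    rw [Equiv.Perm.sign_of_cycleType, hk] at hts
    have : k = 0 ∨ k = 1 ∨ k = 2 := by omega
    rcases this with rfl | rfl | rfl
    · exact absurd hts (by decide)
    · rfl
    · exact absurd hts (by decide)
  subst hk1
  have hc : (Equiv.swap (0 : Fin 7) 1 * Equiv.swap 2 3).cycleType = t.cycleType := by
    rw [hk, Equiv.Perm.Disjoint.cycleType_mul, (Equiv.Perm.isCycle_swap (by decide)).cycleType,
      (Equiv.Perm.isCycle_swap (by decide)).cycleType,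
      Equiv.Perm.card_support_swap (by decide), Equiv.Perm.card_support_swap (by decide)]
    · rfl
    · unfold Equiv.Perm.Disjoint; decide
  obtain ⟨g, hg⟩ := isConj_iff.mp (Equiv.Perm.isConj_iff_cycleType_eq.mpr hc)
  refine ⟨g 0, g 1, g 2, g 3, ?_, ?_, ?_, ?_, ?_, ?_, ?_⟩
  iterate 6 (exact fun h => absurd (g.injective h) (by decide))
  rw [Equiv.swap_apply_apply, Equiv.swap_apply_apply]
  have : g * Equiv.swap 0 1 * g⁻¹ * (g * Equiv.swap 2 3 * g⁻¹) = t := by rw [← hg]; group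
  rw [this]; exact htG

lemma stage1 (G : Subgroup (Equiv.Perm (Fin 7))) (h : rot7 1 ∈ G) (h4 : 4 ∣ Nat.card G) :
    (∃ x ∈ G, x.IsThreeCycle) ∨ Equiv.swap (0 : Fin 7) 1 * Equiv.swap 4 6 ∈ G ∨
      Equiv.swap (0 : Fin 7) 6 * Equiv.swap 3 1 ∈ G := by
  obtain ⟨a, b, p, q, hba, hpa, hpb, hqa, hqb, hqp, hm⟩ := exists_double G h4
  have hr := rot7_mem G h
  set ρ := rot7 (-a) with hρ
  have h0 : ρ a = 0 := by change a + -a = 0; simp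
  have hm' : Equiv.swap 0 (ρ b) * Equiv.swap (ρ p) (ρ q) ∈ G := by
    have : Equiv.swap 0 (ρ b) * Equiv.swap (ρ p) (ρ q) =
        ρ * (Equiv.swap a b * Equiv.swap p q) * ρ⁻¹ := by
      rw [← h0, Equiv.swap_apply_apply, Equiv.swap_apply_apply]; group
    rw [this]
    exact G.mul_mem (G.mul_mem (hr _) hm) (G.inv_mem (hr _))
  have hb0 : ρ b ≠ 0 := fun h => hba (ρ.injective (h.trans h0.symm))
  have hp0 : ρ p ≠ 0 := fun h => hpa (ρ.injective (h.trans h0.symm))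
  have hq0 : ρ q ≠ 0 := fun h => hqa (ρ.injective (h.trans h0.symm))
  have hpb' : ρ p ≠ ρ b := fun h => hpb (ρ.injective h)
  have hqb' : ρ q ≠ ρ b := fun h => hqb (ρ.injective h)
  have hqp' : ρ q ≠ ρ p := fun h => hqp (ρ.injective h)
  have hd := dsw_eq hp0 hpb' hq0 hqb'
  rcases stepA _ hb0 _ hp0 hpb' _ hq0 hqb' hqp' with ⟨w, -, hw⟩ | ⟨w, -, hw⟩ | ⟨w, -, hw⟩
  · left
    refine ⟨_, wordPerm_mem G _ hr hm' w, ?_⟩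
    rw [← card_support_eq_three_iff, ← hw]
    congr 1
    ext x
    simp only [Equiv.Perm.mem_support, Finset.mem_filter, Finset.mem_univ, true_and]
    rw [wordPerm_apply, hd]
  · right; left
    have : Equiv.swap (0 : Fin 7) 1 * Equiv.swap 4 6 =
        wordPerm (Equiv.swap 0 (ρ b) * Equiv.swap (ρ p) (ρ q)) w := by
      refine Equiv.ext fun x => ?_
      rw [wordPerm_apply, hd, hw, dsw_eq (by decide) (by decide) (by decide) (by decide)]
    rw [this]
    exact wordPerm_mem G _ hr hm' w
  · right; right
    have : Equiv.swap (0 : Fin 7) 6 * Equiv.swap 3 1 =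
        wordPerm (Equiv.swap 0 (ρ b) * Equiv.swap (ρ p) (ρ q)) w := by
      refine Equiv.ext fun x => ?_
      rw [wordPerm_apply, hd, hw, dsw_eq (by decide) (by decide) (by decide) (by decide)]
    rw [this]
    exact wordPerm_mem G _ hr hm' w

lemma stage2 (G : Subgroup (Equiv.Perm (Fin 7))) (h : rot7 1 ∈ G)
    (ht : Equiv.swap (0 : Fin 7) 1 * Equiv.swap 4 6 ∈ G) (s : Equiv.Perm (Fin 7)) :
    ∃ u ∈ G, s⁻¹ * u * s ∈ G ∧ u * u * u = 1 ∧ ∃ f, ∀ x, u x = x ↔ x = f := by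
  have hr := rot7_mem G h
  set t := Equiv.swap (0 : Fin 7) 1 * Equiv.swap 4 6 with ht0
  have hd : ⇑t = dsw 0 1 4 6 := dsw_eq (by decide) (by decide) (by decide) (by decide)
  have hmem := wordPerm_mem G t hr ht
  obtain ⟨w, -, hw0, hw1⟩ := stepT (s⁻¹ 0) (s⁻¹ 1) (fun h => absurd (s⁻¹.injective h) (by decide))
  set k := wordPerm t w with hk
  set r := s * k with hr0
  have r0 : r 0 = 0 := by
    rw [hr0, Equiv.Perm.mul_apply, hk, wordPerm_apply, hd, hw0]; simp
  have r1 : r 1 = 1 := by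
    rw [hr0, Equiv.Perm.mul_apply, hk, wordPerm_apply, hd, hw1]; simp
  have e0 : ∀ x, r x = 0 ↔ x = 0 := fun x =>
    ⟨fun h => r.injective (h.trans r0.symm), fun h => h ▸ r0⟩
  have e1 : ∀ x, r x = 1 ↔ x = 1 := fun x =>
    ⟨fun h => r.injective (h.trans r1.symm), fun h => h ▸ r1⟩
  obtain ⟨P, hP, hPr⟩ := stepB (r 2) (by simp [e0, e1]) (r 3) (by simp [e0, e1])
    (r 4) (by simp [e0, e1]) (r 5) (by simp [e0, e1]) (r 6) (by simp [e0, e1])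
  have hfn : fn7 (r 2) (r 3) (r 4) (r 5) (r 6) = ⇑r := by
    funext x
    fin_cases x <;> simp [fn7, r0, r1] <;> rfl
  rw [hfn] at hPr
  obtain ⟨hU1, f, hU2⟩ := stepU P hP
  have hcomm : wordPerm t P.1 * r = r * wordPerm t P.2 := by
    refine Equiv.ext fun x => ?_
    change wordPerm t P.1 (r x) = r (wordPerm t P.2 x)
    rw [wordPerm_apply t P.1, wordPerm_apply t P.2, hd, hPr]
  refine ⟨wordPerm t P.1, hmem _, ?_, ?_, f, ?_⟩
  · have hs : s = r * k⁻¹ := by rw [hr0]; group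
    have : s⁻¹ * wordPerm t P.1 * s = k * wordPerm t P.2 * k⁻¹ := by
      rw [hs]
      calc (r * k⁻¹)⁻¹ * wordPerm t P.1 * (r * k⁻¹)
          = k * r⁻¹ * (wordPerm t P.1 * r) * k⁻¹ := by group
        _ = _ := by rw [hcomm]; group
    rw [this]
    exact G.mul_mem (G.mul_mem (hmem _) (hmem _)) (G.inv_mem (hmem _))
  · refine Equiv.ext fun x => ?_
    rw [Equiv.Perm.mul_apply, Equiv.Perm.mul_apply, wordPerm_apply, wordPerm_apply,
      wordPerm_apply, hd, hU1]
    rfl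
  · intro x
    rw [wordPerm_apply, hd]; exact hU2 x

lemma three_dvd (G : Subgroup (Equiv.Perm (Fin 7))) (σ : Equiv.Perm (Fin 7))
    (C : Set (Equiv.Perm (Fin 7)))
    (hC : C = {τ : Equiv.Perm (Fin 7) | ∃ g ∈ G, τ = σ * g}) (u : Equiv.Perm (Fin 7))
    (hu : u ∈ G) (hu' : σ⁻¹ * u * σ ∈ G) (hu3 : u * u * u = 1)
    (f : Fin 7) (hf : ∀ x, u x = x ↔ x = f) :
    3 ∣ {τ ∈ C | ∀ x, τ x ≠ x}.ncard := by
  classical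
  by_contra hcon
  set X : Set (Equiv.Perm (Fin 7)) := {τ ∈ C | ∀ x, τ x ≠ x} with hX
  have hstab : ∀ τ ∈ X, u * τ * u⁻¹ ∈ X := by
    rintro τ ⟨h1, h2⟩
    rw [hC] at h1
    obtain ⟨g, hg, rfl⟩ := h1
    refine ⟨?_, ?_⟩
    · rw [hC]
      refine ⟨σ⁻¹ * u * σ * g * u⁻¹, G.mul_mem (G.mul_mem hu' hg) (G.inv_mem hu), by group⟩
    · intro x hx
      apply h2 (u⁻¹ x)
      rw [Equiv.Perm.mul_apply, Equiv.Perm.mul_apply] at hx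
      rw [eq_comm, Equiv.Perm.inv_eq_iff_eq, hx]
  let F : X → X := fun τ => ⟨u * τ * u⁻¹, hstab τ τ.2⟩
  have hF3 : ∀ τ, F (F (F τ)) = τ := by
    intro τ
    apply Subtype.ext
    change u * (u * (u * τ.1 * u⁻¹) * u⁻¹) * u⁻¹ = τ.1
    calc u * (u * (u * τ.1 * u⁻¹) * u⁻¹) * u⁻¹ = (u * u * u) * τ.1 * (u * u * u)⁻¹ := by group
      _ = τ.1 := by rw [hu3]; simp
  let E : Equiv.Perm X := ⟨F, fun τ => F (F τ), hF3, hF3⟩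
  have hE : E ^ 3 ^ 1 = 1 := by
    refine Equiv.ext fun τ => ?_
    exact hF3 τ
  have : Fact (Nat.Prime 3) := ⟨Nat.prime_three⟩
  obtain ⟨τ, hτ⟩ := Equiv.Perm.exists_fixed_point_of_prime (p := 3) (n := 1) (α := X)
    (by rw [← Nat.card_eq_fintype_card]; exact hcon) hE
  have h1 : u * τ.1 * u⁻¹ = τ.1 := congrArg Subtype.val hτ
  have h2 : u * τ.1 = τ.1 * u := mul_inv_eq_iff_eq_mul.mp h1
  have h3 : u (τ.1 f) = τ.1 f := by
    have := DFunLike.congr_fun h2 f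
    rw [Equiv.Perm.mul_apply, Equiv.Perm.mul_apply, (hf f).mpr rfl] at this
    exact this
  exact τ.2.2 f ((hf _).mp h3)

lemma seven (G : Subgroup (Equiv.Perm (Fin 7))) (hprim : MulAction.IsPreprimitive G (Fin 7))
    (σ : Equiv.Perm (Fin 7)) (C : Set (Equiv.Perm (Fin 7)))
    (hC : C = {τ : Equiv.Perm (Fin 7) | ∃ g ∈ G, τ = σ * g})
    (hd : {τ ∈ C | ∀ x, τ x ≠ x}.ncard * G.index = 1860) :
    alternatingGroup (Fin 7) ≤ G := by
  set d := {τ ∈ C | ∀ x, τ x ≠ x}.ncard with hd0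
  have hcard : Nat.card G * G.index = 5040 := by
    rw [G.card_mul_index, Nat.card_perm, Nat.card_fin]; rfl
  have hthree : ∀ x ∈ G, x.IsThreeCycle → alternatingGroup (Fin 7) ≤ G := fun x hx h =>
    Equiv.Perm.alternatingGroup_le_of_isPreprimitive_of_isThreeCycle_mem hprim h hx
  have hd3 : 3 ∣ d → alternatingGroup (Fin 7) ≤ G := by
    intro h3
    obtain ⟨x, hx, -, hs⟩ := cycle_in G Nat.prime_three (by norm_num) (by
      intro h
      have := mul_dvd_mul h3 h
      rw [hd] at this
      exact absurd this (by decide))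
    exact hthree x hx (card_support_eq_three_iff.mp hs)
  have h4 : 4 ∣ Nat.card G := by
    have : 31 * Nat.card G = 84 * d := by
      have hpos : 0 < G.index := Nat.pos_of_ne_zero (by rintro h; rw [h] at hd; omega)
      apply Nat.eq_of_mul_eq_mul_right hpos
      rw [mul_assoc, hcard, mul_assoc, hd]
      norm_num
    omega
  obtain ⟨g, hgG, hgc, hgs⟩ := cycle_in G (p := 7) (by norm_num) le_rfl (by
    intro h
    have := h.mul_left d
    rw [hd] at this
    exact absurd this (by decide))
  have hct : (rot7 1).cycleType = g.cycleType := by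
    have h1 : rot7 1 = finRotate (5 + 2) := by decide +kernel
    rw [h1, cycleType_finRotate, hgc.cycleType, hgs]
  obtain ⟨τ, hτ⟩ := isConj_iff.mp (Equiv.Perm.isConj_iff_cycleType_eq.mpr hct)
  have key : ∀ τ : Equiv.Perm (Fin 7), τ * rot7 1 * τ⁻¹ ∈ G →
      τ * (Equiv.swap (0 : Fin 7) 1 * Equiv.swap 4 6) * τ⁻¹ ∈ G →
      alternatingGroup (Fin 7) ≤ G := by
    intro τ h1 h2
    apply hd3
    obtain ⟨u, hu, hu', hu3, f, hf⟩ := stage2 (G.comap (MulAut.conj τ).toMonoidHom) h1 h2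
      (τ⁻¹ * σ * τ)
    refine three_dvd G σ C hC (τ * u * τ⁻¹) hu ?_ ?_ (τ f) ?_
    · have : τ * ((τ⁻¹ * σ * τ)⁻¹ * u * (τ⁻¹ * σ * τ)) * τ⁻¹ ∈ G := hu'
      convert this using 1
      group
    · calc τ * u * τ⁻¹ * (τ * u * τ⁻¹) * (τ * u * τ⁻¹) = τ * (u * u * u) * τ⁻¹ := by group
        _ = 1 := by rw [hu3]; group
    · intro x
      have h3 := hf (τ⁻¹ x)
      rw [Equiv.Perm.inv_eq_iff_eq] at h3
      rw [Equiv.Perm.mul_apply, Equiv.Perm.mul_apply, ← h3, eq_comm, ← Equiv.Perm.inv_eq_iff_eq,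
        eq_comm]
  have hrG : τ * rot7 1 * τ⁻¹ ∈ G := by rw [hτ]; exact hgG
  have hcomapcard : 4 ∣ Nat.card (G.comap (MulAut.conj τ).toMonoidHom) := by
    have : Nat.card (G.comap (MulAut.conj τ).toMonoidHom) = Nat.card G :=
      Nat.card_congr ((MulAut.conj τ).toEquiv.subtypeEquiv (fun x => Iff.rfl))
    rw [this]; exact h4
  rcases stage1 (G.comap (MulAut.conj τ).toMonoidHom) hrG hcomapcard with ⟨x, hx, h3⟩ | h | h
  · refine hthree (τ * x * τ⁻¹) hx ?_
    rw [Equiv.Perm.IsThreeCycle, Equiv.Perm.cycleType_conj]; exact h3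
  · exact key τ hrG h
  · have hν := key (τ * Equiv.neg (Fin 7))
    apply hν
    · have : τ * Equiv.neg (Fin 7) * rot7 1 * (τ * Equiv.neg (Fin 7))⁻¹ =
          (τ * rot7 1 * τ⁻¹)⁻¹ := by
        have h1 : Equiv.neg (Fin 7) * rot7 1 * (Equiv.neg (Fin 7))⁻¹ = (rot7 1)⁻¹ := by
          decide +kernel
        calc τ * Equiv.neg (Fin 7) * rot7 1 * (τ * Equiv.neg (Fin 7))⁻¹
            = τ * (Equiv.neg (Fin 7) * rot7 1 * (Equiv.neg (Fin 7))⁻¹) * τ⁻¹ := by group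
          _ = _ := by rw [h1]; group
      rw [this]; exact G.inv_mem hrG
    · have : τ * Equiv.neg (Fin 7) * (Equiv.swap (0 : Fin 7) 1 * Equiv.swap 4 6) *
          (τ * Equiv.neg (Fin 7))⁻¹ = τ * (Equiv.swap (0 : Fin 7) 6 * Equiv.swap 3 1) * τ⁻¹ := by
        have h1 : Equiv.neg (Fin 7) * (Equiv.swap (0 : Fin 7) 1 * Equiv.swap 4 6) *
            (Equiv.neg (Fin 7))⁻¹ = Equiv.swap (0 : Fin 7) 6 * Equiv.swap 3 1 := by
          decide +kernel
        rw [← h1]; group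
      rw [this]; exact h

theorem derangement_proportion_characterizes_alternating
    (n : ℕ) (hn : 7 ≤ n) (G : Subgroup (Equiv.Perm (Fin n)))
    (C : Set (Equiv.Perm (Fin n)))
    (hC : ∃ σ : Equiv.Perm (Fin n), C = {τ : Equiv.Perm (Fin n) | ∃ g ∈ G, τ = σ * g})
    (h : ({σ ∈ C | ∀ x, σ x ≠ x}.ncard : ℚ) / (C.ncard : ℚ)
        = ({σ : Equiv.Perm (Fin n) | σ ∈ alternatingGroup (Fin n) ∧ ∀ x, σ x ≠ x}.ncard : ℚ)
          / (Nat.card (alternatingGroup (Fin n)) : ℚ)) :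
    G = alternatingGroup (Fin n) := by
  obtain ⟨σ, hσ⟩ := hC
  have hd := deriv_dvd (by omega) G σ C hσ h
  have hdvd : (G.index : ℤ) ∣ evenD n := ⟨_, by rw [mul_comm]; exact hd.symm⟩
  have hne : G ≠ ⊤ := by
    rintro rfl
    have hCu : C = Set.univ := by
      rw [hσ]
      ext τ
      simp only [Set.mem_univ, iff_true]
      exact ⟨σ⁻¹ * τ, Subgroup.mem_top _, by group⟩
    have h1 : ({τ ∈ C | ∀ x, τ x ≠ x}.ncard : ℤ) = numDerangements n := by
      classical
      have h2 : {τ ∈ C | ∀ x, τ x ≠ x} = derangements (Fin n) := by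
        rw [hCu]
        ext τ
        simp [derangements]
      rw [h2, ← card_derangements_fin_eq_numDerangements, ← Nat.card_eq_fintype_card]
      rfl
    rw [h1, Subgroup.index_top, evenD] at hd
    have h3 : (-1 : ℤ) ^ (n + 1) * ((n : ℤ) - 1) = 0 := by push_cast at hd; linarith
    rcases mul_eq_zero.mp h3 with h4 | h4
    · exact absurd h4 (pow_ne_zero _ (by norm_num))
    · omega
  refine eq_alt hn G ?_ hne
  rcases Nat.lt_or_ge n 8 with h8 | h8
  · obtain rfl : n = 7 := by omega
    refine seven G (primitive_of hn G hdvd) σ C hσ ?_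
    have h7 : evenD 7 = 1860 := by
      rw [evenD]; norm_num [numDerangements]
    rw [h7] at hd
    exact_mod_cast hd
  · exact ge_alt h8 G hdvd
end
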